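/- arXiv:1602.04377 — 3 statements merged into one kernel-verified Lean document; each statement's English description precedes it below -/
import Mathlib

section
/- Let n ≥ 1 and let G be a compact subgroup of the group GL(n, ℝ) of invertible linear transformations of ℝⁿ. Let Π be the group of affine transformations of ℝⁿ of the form x ↦ g x + v with g ∈ G and v ∈ ℝⁿ. Suppose K₀ is a convex body in ℝⁿ and x₀ is a point in the interior of K₀ such that A x₀ = x₀ for every A ∈ Π with A(K₀) = K₀. Then there exists a Π-invariant point of the body p : Wₙ → ℝⁿ (i.e., p is continuous in the Hausdorff metric, satisfies p(A(K)) = A(p(K)) for every convex body K and every A ∈ Π, and p(K) ∈ K for every convex body K) such that p(K₀) = x₀. -/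
/-!
The proof extends the prescribed value from the orbit of `K₀` by Tietze's theorem and then averages
over `G`.

Translations are removed first: `corner K`, the vector of coordinate maxima of `K`, is continuous
and commutes with translations, so `centre K = K - corner K` depends only on `K` up to translation.
Consider the continuous map `g ↦ centre (g K₀)` on the compact group `G`. By the hypothesis on the
stabilizer of `K₀`, the vector `g x₀ - corner (g K₀)` depends only on `centre (g K₀)`, hence is a
continuous function on the compact range of this map; let `F` be a Tietze extension of it. With
`proj` the nearest-point projection, `f L = proj L (corner L + F (centre L))` is continuous in
`L`, lies in `L`, commutes with translations, and satisfies `f (g K₀) = g x₀` for `g ∈ G`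
(`exists_translation_covariant`; continuity rests on the estimate `dist_proj_proj_le`).

Finally `p L = ∫ g (f (g⁻¹ L)) dμ(g)`, with `μ` the Haar probability measure on `G`, is
`Π`-equivariant by left invariance of `μ`, lies in `L` because `L` is convex and closed, and equals
`x₀` at `K₀` because there the integrand is constant (`exists_average`).
-/

open Set TopologicalSpace

noncomputable section

/-- `ℝⁿ` as a Euclidean space. -/
abbrev Euc (n : ℕ) := EuclideanSpace ℝ (Fin n)

/-- The space `Wₙ` of convex bodies in `ℝⁿ`: compact convex sets with nonempty interior,
topologized (as a subtype of the nonempty compact sets) by the Hausdorff metric. -/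
abbrev ConvBody (n : ℕ) :=
  {K : NonemptyCompacts (Euc n) //
    Convex ℝ (K : Set (Euc n)) ∧ (interior (K : Set (Euc n))).Nonempty}

open MeasureTheory Metric

/-! ### Affine images of compact convex sets -/

/-- Compact nonempty convex subsets of `ℝⁿ`, with the Hausdorff metric. Dropping the
nonempty-interior condition lets arbitrary, possibly singular, affine maps act. -/
abbrev CompConv (n : ℕ) := {K : NonemptyCompacts (Euc n) // Convex ℝ (K : Set (Euc n))}

/-- The image of `K` under the affine map `x ↦ T x + v`. -/
def aff {n : ℕ} (T : Euc n →L[ℝ] Euc n) (v : Euc n) (K : CompConv n) : CompConv n :=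
  ⟨K.1.map (fun x => T x + v) (by fun_prop), by
    rw [NonemptyCompacts.coe_map]
    have h : (fun x => T x + v) '' (K.1 : Set (Euc n)) = (fun x => v + x) '' (T '' K.1) := by
      simp only [image_image, add_comm v]
    rw [h]
    exact Convex.translate (K.2.linear_image T.toLinearMap) v⟩

lemma coe_aff {n : ℕ} (T : Euc n →L[ℝ] Euc n) (v : Euc n) (K : CompConv n) :
    ((aff T v K).1 : Set (Euc n)) = (fun x => T x + v) '' (K.1 : Set (Euc n)) := by
  simp [aff]

lemma aff_comp {n : ℕ} (S T : Euc n →L[ℝ] Euc n) (w v : Euc n) (K : CompConv n) :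
    aff S w (aff T v K) = aff (S * T) (S v + w) K := by
  apply Subtype.ext
  apply SetLike.coe_injective
  simp only [coe_aff, image_image]
  refine image_congr fun x _ => ?_
  simp [add_assoc]

lemma aff_one_zero {n : ℕ} (K : CompConv n) : aff 1 0 K = K := by
  apply Subtype.ext
  apply SetLike.coe_injective
  simp [coe_aff]

lemma continuous_aff {n : ℕ} {X : Type*} [TopologicalSpace X] {T : X → Euc n →L[ℝ] Euc n}
    {v : X → Euc n} {K : X → CompConv n} (hT : Continuous T) (hv : Continuous v)
    (hK : Continuous K) : Continuous fun x => aff (T x) (v x) (K x) := by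
  refine Continuous.subtype_mk ?_ _
  exact Continuous.nonemptyCompacts_map' (g := fun x y => T x y + v x)
    (continuous_subtype_val.comp hK) (by
      have h1 : Continuous fun p : X × Euc n => T p.1 p.2 :=
        (hT.comp continuous_fst).clm_apply continuous_snd
      exact h1.add (hv.comp continuous_fst))

/-! ### A continuous translation-covariant base point -/

/-- The vector of coordinate maxima of `K`, that is, the upper corner of its bounding box. It
need not lie in `K`; only its continuity and its covariance under translations matter. -/
def corner {n : ℕ} (K : CompConv n) : Euc n :=
  WithLp.toLp 2 fun i => sSup ((fun x : Euc n => x i) '' (K.1 : Set (Euc n)))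

lemma isGreatest_corner {n : ℕ} (K : CompConv n) (i : Fin n) :
    IsGreatest ((fun x : Euc n => x i) '' (K.1 : Set (Euc n))) (corner K i) :=
  (K.1.isCompact.image (by fun_prop)).isGreatest_sSup (K.1.nonempty.image _)

lemma exists_dist_le {n : ℕ} (K L : CompConv n) {x : Euc n} (hx : x ∈ K.1) :
    ∃ y ∈ L.1, dist x y ≤ dist K L := by
  obtain ⟨y, hy, h⟩ := L.1.isCompact.exists_infDist_eq_dist L.1.nonempty x
  refine ⟨y, hy, h ▸ ?_⟩
  exact infDist_le_hausdorffDist_of_mem hx (edist_ne_top K.1 L.1)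

lemma continuous_corner {n : ℕ} : Continuous (corner : CompConv n → Euc n) := by
  refine (PiLp.continuous_toLp 2 _).comp (continuous_pi fun i => ?_)
  refine LipschitzWith.continuous (K := 1) (LipschitzWith.of_le_add fun K L => ?_)
  obtain ⟨x, hx, hxi⟩ := (isGreatest_corner K i).1
  obtain ⟨y, hy, hxy⟩ := exists_dist_le K L hx
  have h1 : y i ≤ corner L i := (isGreatest_corner L i).2 ⟨y, hy, rfl⟩
  have h2 : |x i - y i| ≤ dist x y := by
    rw [dist_eq_norm]
    simpa using PiLp.norm_apply_le (x - y) i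
  change corner K i ≤ corner L i + dist K L
  simp only at hxi
  linarith [le_abs_self (x i - y i)]

lemma corner_translate {n : ℕ} (v : Euc n) (K : CompConv n) :
    corner (aff 1 v K) = corner K + v := by
  ext i
  refine (isGreatest_corner (aff 1 v K) i).unique ?_
  obtain ⟨⟨x, hx, hxi⟩, h2⟩ := isGreatest_corner K i
  rw [coe_aff, image_image]
  simp only at hxi
  refine ⟨⟨x, hx, by simp [hxi]⟩, ?_⟩
  rintro _ ⟨y, hy, rfl⟩
  simpa using h2 ⟨y, hy, rfl⟩

/-- The translate of `K` whose corner is the origin. -/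
def centre {n : ℕ} (K : CompConv n) : CompConv n := aff 1 (-corner K) K

lemma centre_translate {n : ℕ} (v : Euc n) (K : CompConv n) :
    centre (aff 1 v K) = centre K := by
  simp [centre, aff_comp, corner_translate]

lemma continuous_centre {n : ℕ} : Continuous (centre : CompConv n → CompConv n) :=
  continuous_aff continuous_const continuous_corner.neg continuous_id

/-! ### The nearest-point projection -/

/-- The nearest point is encoded by its variational inequality. -/
lemma exists_proj {n : ℕ} (K : CompConv n) (y : Euc n) :
    ∃ a ∈ K.1, ∀ x ∈ K.1, inner ℝ (y - a) (x - a) ≤ 0 := by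
  obtain ⟨a, ha, h⟩ := exists_norm_eq_iInf_of_complete_convex K.1.nonempty
    K.1.isCompact.isComplete K.2 y
  exact ⟨a, ha, (norm_eq_iInf_iff_real_inner_le_zero K.2 ha).1 h⟩

/-- The point of `K` nearest to `y`. -/
def proj {n : ℕ} (K : CompConv n) (y : Euc n) : Euc n := (exists_proj K y).choose

lemma proj_mem {n : ℕ} (K : CompConv n) (y : Euc n) : proj K y ∈ K.1 :=
  (exists_proj K y).choose_spec.1

lemma inner_proj_le {n : ℕ} (K : CompConv n) (y : Euc n) {x : Euc n} (hx : x ∈ K.1) :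
    inner ℝ (y - proj K y) (x - proj K y) ≤ 0 :=
  (exists_proj K y).choose_spec.2 x hx

/-- The obtuse-angle property in quantitative form. -/
lemma sq_dist_proj_le {n : ℕ} (K : CompConv n) (y : Euc n) {x : Euc n} (hx : x ∈ K.1) :
    dist x (proj K y) ^ 2 ≤ dist x y ^ 2 - dist (proj K y) y ^ 2 := by
  have h := inner_proj_le K y hx
  have e : x - y = (x - proj K y) - (y - proj K y) := by abel
  rw [dist_eq_norm x y, e, norm_sub_sq_real, dist_eq_norm, dist_comm, dist_eq_norm,
    real_inner_comm]
  linarith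

lemma dist_proj_le {n : ℕ} (K : CompConv n) (y : Euc n) {x : Euc n} (hx : x ∈ K.1) :
    dist (proj K y) y ≤ dist x y := by
  have := sq_dist_proj_le K y hx
  exact (sq_le_sq₀ dist_nonneg dist_nonneg).1 (by linarith [sq_nonneg (dist x (proj K y))])

lemma proj_unique {n : ℕ} (K : CompConv n) (y : Euc n) {a : Euc n} (ha : a ∈ K.1)
    (h : dist a y ≤ dist (proj K y) y) : proj K y = a := by
  have h1 := sq_dist_proj_le K y ha
  have h2 := dist_proj_le K y ha
  rw [le_antisymm h h2] at h1
  have : dist a (proj K y) = 0 := by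
    have := sq_nonneg (dist a (proj K y))
    exact pow_eq_zero_iff (two_ne_zero) |>.1 (by linarith)
  exact (dist_eq_zero.1 this).symm

lemma proj_of_mem {n : ℕ} (K : CompConv n) {y : Euc n} (hy : y ∈ K.1) : proj K y = y :=
  proj_unique K y hy (by simp)

lemma proj_translate {n : ℕ} (K : CompConv n) (y v : Euc n) :
    proj (aff 1 v K) (y + v) = proj K y + v := by
  have mem : ∀ z, z ∈ (aff 1 v K).1 ↔ ∃ x ∈ K.1, x + v = z := fun z => by
    rw [← SetLike.mem_coe, coe_aff]; rfl
  refine proj_unique _ _ ((mem _).2 ⟨_, proj_mem K y, rfl⟩) ?_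
  obtain ⟨x, hx, e⟩ := (mem _).1 (proj_mem (aff 1 v K) (y + v))
  rw [← e, dist_add_right, dist_add_right]
  exact dist_proj_le K y hx

/-- A Hölder estimate of exponent `1/2` for the projection, jointly in the body and the point. -/
lemma dist_proj_proj_le {n : ℕ} (K L : CompConv n) (y z : Euc n) :
    dist (proj K y) (proj L z) ≤
      √(4 * (dist K L + dist y z) * (dist (proj L z) z + dist K L + dist y z)) + dist K L := by
  obtain ⟨x, hx, hxb⟩ := exists_dist_le L K (proj_mem L z)
  obtain ⟨w, hw, hwa⟩ := exists_dist_le K L (proj_mem K y)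
  rw [dist_comm L K] at hxb
  have h1 : dist x y ≤ dist (proj L z) z + dist K L + dist y z := by
    have := dist_triangle4 x (proj L z) z y
    rw [dist_comm x (proj L z), dist_comm z y] at this
    linarith
  have h2 : dist (proj L z) z ≤ dist (proj K y) y + dist K L + dist y z := by
    have := dist_triangle4 w (proj K y) y z
    rw [dist_comm w (proj K y)] at this
    linarith [dist_proj_le L z hw]
  have h3 := sq_dist_proj_le K y hx
  have h4 := dist_proj_le K y hx
  have h5 : dist x (proj K y) ≤
      √(4 * (dist K L + dist y z) * (dist (proj L z) z + dist K L + dist y z)) := by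
    apply Real.le_sqrt_of_sq_le
    have hD : 0 ≤ dist (proj K y) y := dist_nonneg
    have hK : 0 ≤ dist K L := dist_nonneg
    have hy : 0 ≤ dist y z := dist_nonneg
    have h6 : dist x y - dist (proj K y) y ≤ 2 * (dist K L + dist y z) := by linarith
    have h7 : dist x y + dist (proj K y) y ≤
        2 * (dist (proj L z) z + dist K L + dist y z) := by linarith
    have h8 := mul_le_mul h6 h7 (by positivity) (by positivity)
    linarith [h8]
  have := dist_triangle (proj K y) x (proj L z)
  rw [dist_comm (proj K y) x, dist_comm x (proj L z)] at this
  linarith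

lemma continuous_proj {n : ℕ} : Continuous fun q : CompConv n × Euc n => proj q.1 q.2 := by
  rw [continuous_iff_continuousAt]
  rintro ⟨L, z⟩
  rw [ContinuousAt, tendsto_iff_dist_tendsto_zero]
  refine squeeze_zero (fun _ => dist_nonneg) (fun q => dist_proj_proj_le q.1 L q.2 z) ?_
  have : Continuous fun q : CompConv n × Euc n =>
      √(4 * (dist q.1 L + dist q.2 z) * (dist (proj L z) z + dist q.1 L + dist q.2 z))
        + dist q.1 L := by fun_prop
  simpa using this.tendsto (L, z)

/-! ### Extension from the orbit and averaging over the group -/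

/-- A translation-covariant continuous choice of a point in each body, taking the prescribed
value on the whole orbit of `K`. -/
lemma exists_translation_covariant {n : ℕ} (G : Subgroup ((Euc n →L[ℝ] Euc n)ˣ))
    (hG : IsCompact (G : Set ((Euc n →L[ℝ] Euc n)ˣ))) (K : CompConv n) (x₀ : Euc n)
    (hx₀ : x₀ ∈ K.1)
    (hfix : ∀ g ∈ G, ∀ v : Euc n, aff (g : Euc n →L[ℝ] Euc n) v K = K →
      (g : Euc n →L[ℝ] Euc n) x₀ + v = x₀) :
    ∃ f : CompConv n → Euc n, Continuous f ∧ (∀ v L, f (aff 1 v L) = f L + v) ∧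
      (∀ L, f L ∈ L.1) ∧ ∀ g ∈ G, f (aff (g : Euc n →L[ℝ] Euc n) 0 K) =
        (g : Euc n →L[ℝ] Euc n) x₀ := by
  have : CompactSpace G := isCompact_iff_compactSpace.mp hG
  let T : G → Euc n →L[ℝ] Euc n := fun g => ((g : (Euc n →L[ℝ] Euc n)ˣ) : Euc n →L[ℝ] Euc n)
  have hT : Continuous T := Units.continuous_val.comp continuous_subtype_val
  have hTinv : ∀ g, T g⁻¹ * T g = 1 := fun g => by simp [T]
  let e : G → CompConv n := fun g => centre (aff (T g) 0 K)
  let u : G → Euc n := fun g => T g x₀ - corner (aff (T g) 0 K)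
  have hact : Continuous fun g => aff (T g) 0 K :=
    continuous_aff hT continuous_const continuous_const
  have he : Continuous e := continuous_centre.comp hact
  have hu : Continuous u :=
    (hT.clm_apply continuous_const).sub (continuous_corner.comp hact)
  -- the stabilizer hypothesis says exactly that `u` factors through `e`
  have hue : ∀ g h, e g = e h → u g = u h := by
    intro g h hgh
    have h1 : aff (T h⁻¹) (T h⁻¹ (corner (aff (T h) 0 K))) (e h) = K := by
      simp only [e, centre, aff_comp]
      rw [← mul_assoc, mul_assoc (T h⁻¹), one_mul, hTinv]
      simp [aff_one_zero]
    rw [← hgh] at h1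
    simp only [e, centre, aff_comp] at h1
    -- equality of the centred images makes `h⁻¹ g` plus a translation a symmetry of `K`
    have h2 := hfix ((h⁻¹ * g : G) : (Euc n →L[ℝ] Euc n)ˣ) (h⁻¹ * g).2
      (T h⁻¹ (corner (aff (T h) 0 K)) - T h⁻¹ (corner (aff (T g) 0 K))) (by
        convert h1 using 2
        · rw [one_mul]; rfl
        · rw [map_add, map_neg, map_zero, map_zero, zero_add]
          abel)
    have h3 := congrArg (T h) h2
    have h4 : ∀ x, T h (T h⁻¹ x) = x := fun x => by
      have : (T h * T h⁻¹) x = x := by simp [T]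
      exact this
    have h5 : (((h⁻¹ * g : G) : (Euc n →L[ℝ] Euc n)ˣ) : Euc n →L[ℝ] Euc n) x₀ =
      T h⁻¹ (T g x₀) := rfl
    rw [h5, map_add, map_sub, h4, h4, h4] at h3
    simp only [u]
    rw [← h3]
    abel
  have hq : Topology.IsQuotientMap (rangeFactorization e) :=
    Topology.IsQuotientMap.of_surjective_continuous rangeFactorization_surjective (he.subtype_mk _)
  have hcl : IsClosed (range e) := (isCompact_range he).isClosed
  choose σ hσ using fun y : range e => y.2
  have hσu : ∀ g, u (σ (rangeFactorization e g)) = u g := fun g => hue _ _ (hσ _)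
  -- continuity of `u` on the range of `e` holds because `e` is a quotient map onto its range
  let φ : C(range e, Euc n) := ⟨fun y => u (σ y), by
    rw [hq.continuous_iff]
    exact hu.congr fun g => (hσu g).symm⟩
  have : TietzeExtension.{0, 0} (Euc n) := TietzeExtension.of_tvs ℝ
  obtain ⟨F, hF⟩ := φ.exists_restrict_eq hcl
  have hFe : ∀ g, F (e g) = u g := fun g => by
    have := congrArg (fun ψ => ψ (rangeFactorization e g)) hF
    exact this.trans (hσu g)
  refine ⟨fun L => proj L (corner L + F (centre L)), ?_, ?_, fun L => proj_mem _ _, ?_⟩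
  · exact continuous_proj.comp (continuous_id.prodMk
      (continuous_corner.add (F.continuous.comp continuous_centre)))
  · intro v L
    simp only
    rw [corner_translate, centre_translate, add_right_comm, proj_translate]
  · intro g hg
    have h := hFe ⟨g, hg⟩
    simp only [e, u, T] at h
    simp only
    rw [h, add_sub_cancel]
    refine proj_of_mem _ ?_
    rw [← SetLike.mem_coe, coe_aff]
    exact ⟨x₀, hx₀, by simp⟩

/-- A jointly continuous family over a compact space integrates to a continuous function, with no
local compactness of the parameter space: the family is a continuous map into `C(Y, E)`, on which
the integral is 1-Lipschitz. -/
lemma continuous_integral_param {X Y E : Type*} [TopologicalSpace X] [TopologicalSpace Y]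
    [CompactSpace Y] [MeasurableSpace Y] [BorelSpace Y] [NormedAddCommGroup E] [NormedSpace ℝ E]
    (μ : Measure Y) [IsProbabilityMeasure μ] {f : X → Y → E} (hf : Continuous f.uncurry) :
    Continuous fun x => ∫ y, f x y ∂μ := by
  have hint : ∀ φ : C(Y, E), Integrable φ μ := fun φ =>
    φ.continuous.integrable_of_hasCompactSupport (HasCompactSupport.of_compactSpace φ)
  have h1 : Continuous fun φ : C(Y, E) => ∫ y, φ y ∂μ := by
    refine LipschitzWith.continuous (K := 1) (LipschitzWith.of_dist_le_mul fun φ ψ => ?_)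
    rw [dist_eq_norm, ← integral_sub (hint φ) (hint ψ)]
    refine (norm_integral_le_of_norm_le_const (C := dist φ ψ) (.of_forall fun y => ?_)).trans ?_
    · rw [← dist_eq_norm]
      exact ContinuousMap.dist_apply_le_dist y
    · simp
  exact h1.comp (ContinuousMap.curry ⟨f.uncurry, hf⟩).continuous

/-- Averaging a translation-covariant choice over a compact group makes it covariant under
the group as well. -/
lemma exists_average {n : ℕ} (G : Subgroup ((Euc n →L[ℝ] Euc n)ˣ))
    (hG : IsCompact (G : Set ((Euc n →L[ℝ] Euc n)ˣ))) (f : CompConv n → Euc n)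
    (hf : Continuous f) (hft : ∀ v L, f (aff 1 v L) = f L + v) (hfm : ∀ L, f L ∈ L.1)
    (K : CompConv n) (x₀ : Euc n)
    (hfK : ∀ g ∈ G, f (aff (g : Euc n →L[ℝ] Euc n) 0 K) = (g : Euc n →L[ℝ] Euc n) x₀) :
    ∃ p : CompConv n → Euc n, Continuous p ∧
      (∀ g ∈ G, ∀ v L, p (aff (g : Euc n →L[ℝ] Euc n) v L) =
        (g : Euc n →L[ℝ] Euc n) (p L) + v) ∧
      (∀ L, p L ∈ L.1) ∧ p K = x₀ := by
  have : CompactSpace G := isCompact_iff_compactSpace.mp hG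
  let _ : MeasurableSpace G := borel G
  have : BorelSpace G := ⟨rfl⟩
  let μ : Measure G := Measure.haarMeasure ⊤
  have hμ : IsProbabilityMeasure μ :=
    ⟨by simpa using Measure.haarMeasure_self (K₀ := (⊤ : PositiveCompacts G))⟩
  let T : G → Euc n →L[ℝ] Euc n := fun g => ((g : (Euc n →L[ℝ] Euc n)ˣ) : Euc n →L[ℝ] Euc n)
  have hT : Continuous T := Units.continuous_val.comp continuous_subtype_val
  have hmul : ∀ g h, T (g * h) = T g * T h := fun g h => rfl
  have hinv : ∀ g x, T g (T g⁻¹ x) = x := fun g x => by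
    have : (T g * T g⁻¹) x = x := by simp [T]
    exact this
  let Φ : CompConv n → G → Euc n := fun L g => T g (f (aff (T g⁻¹) 0 L))
  have hΦ : Continuous Φ.uncurry :=
    (hT.comp continuous_snd).clm_apply (hf.comp (continuous_aff
      (hT.comp (continuous_inv.comp continuous_snd)) continuous_const continuous_fst))
  have hint : ∀ L, Integrable (Φ L) μ := fun L =>
    (hΦ.comp (Continuous.prodMk_right L)).integrable_of_hasCompactSupport
      (HasCompactSupport.of_compactSpace _)
  refine ⟨fun L => ∫ g, Φ L g ∂μ, continuous_integral_param μ hΦ, ?_, ?_, ?_⟩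
  · intro h hh v L
    -- the substitution `g ↦ h⁻¹ g` moves `h` out of the integrand
    have key : ∀ g, Φ (aff (T ⟨h, hh⟩) v L) g =
        T ⟨h, hh⟩ (Φ L (⟨h, hh⟩⁻¹ * g)) + v := by
      intro g
      have e1 : aff (T g⁻¹) 0 (aff (T ⟨h, hh⟩) v L) =
          aff 1 (T g⁻¹ v) (aff (T (⟨h, hh⟩⁻¹ * g)⁻¹) 0 L) := by
        rw [aff_comp, aff_comp, mul_inv_rev, inv_inv, hmul]
        simp
      simp only [Φ]
      rw [e1, hft, map_add, hinv, hmul, mul_apply_eq_comp, hinv]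
    change ∫ g, Φ (aff (T ⟨h, hh⟩) v L) g ∂μ = T ⟨h, hh⟩ (∫ g, Φ L g ∂μ) + v
    have hi2 : Integrable (fun g => Φ L (⟨h, hh⟩⁻¹ * g)) μ := (hint L).comp_mul_left _
    simp_rw [key]
    rw [integral_add ((T ⟨h, hh⟩).integrable_comp hi2) (integrable_const v),
      (T ⟨h, hh⟩).integral_comp_comm hi2, integral_mul_left_eq_self]
    simp
  · intro L
    refine L.2.integral_mem L.1.isCompact.isClosed (.of_forall fun g => ?_) (hint L)
    have h := hfm (aff (T g⁻¹) 0 L)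
    rw [← SetLike.mem_coe, coe_aff] at h
    obtain ⟨x, hx, e⟩ := h
    simp only [Φ]
    rw [← e]
    simpa [hinv] using hx
  · have : ∀ g, Φ K g = x₀ := fun g => by
      simp only [Φ]
      rw [show f (aff (T g⁻¹) 0 K) = T g⁻¹ x₀ from hfK _ (g⁻¹).2, hinv]
    simp [this]

theorem stmt0 (n : ℕ) (hn : 1 ≤ n)
    (G : Subgroup ((Euc n →L[ℝ] Euc n)ˣ))
    (hG : IsCompact (G : Set ((Euc n →L[ℝ] Euc n)ˣ)))
    (K₀ : ConvBody n) (x₀ : Euc n)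
    (hx₀ : x₀ ∈ interior (K₀.1 : Set (Euc n)))
    -- `x₀` is fixed by every `A ∈ Π` (i.e. `A : x ↦ g x + v`, `g ∈ G`, `v ∈ ℝⁿ`) with `A(K₀) = K₀`
    (hfix : ∀ g ∈ G, ∀ v : Euc n,
      (fun x => (g : Euc n →L[ℝ] Euc n) x + v) '' (K₀.1 : Set (Euc n)) = (K₀.1 : Set (Euc n)) →
      (g : Euc n →L[ℝ] Euc n) x₀ + v = x₀) :
    ∃ p : ConvBody n → Euc n,
      Continuous p ∧
      (∀ K L : ConvBody n, ∀ g ∈ G, ∀ v : Euc n,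
        (L.1 : Set (Euc n)) =
            (fun x => (g : Euc n →L[ℝ] Euc n) x + v) '' (K.1 : Set (Euc n)) →
        p L = (g : Euc n →L[ℝ] Euc n) (p K) + v) ∧
      (∀ K : ConvBody n, p K ∈ (K.1 : Set (Euc n))) ∧
      p K₀ = x₀ := by
  have haff : ∀ (K L : ConvBody n) (T : Euc n →L[ℝ] Euc n) (v : Euc n),
      (L.1 : Set (Euc n)) = (fun x => T x + v) '' (K.1 : Set (Euc n)) →
      (⟨L.1, L.2.1⟩ : CompConv n) = aff T v ⟨K.1, K.2.1⟩ := fun K L T v h => by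
    apply Subtype.ext
    apply SetLike.coe_injective
    rw [coe_aff]
    exact h
  obtain ⟨f, hf, hft, hfm, hfK⟩ := exists_translation_covariant G hG ⟨K₀.1, K₀.2.1⟩ x₀
    (interior_subset hx₀) fun g hg v h => hfix g hg v (by
      have h' := congrArg (fun L : CompConv n => (L.1 : Set (Euc n))) h
      simpa only [coe_aff] using h')
  obtain ⟨p, hp, hpe, hpm, hpK⟩ := exists_average G hG f hf hft hfm _ x₀ hfK
  refine ⟨fun K => p ⟨K.1, K.2.1⟩, hp.comp (continuous_subtype_val.subtype_mk _), ?_,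
    fun K => hpm ⟨K.1, K.2.1⟩, hpK⟩
  intro K L g hg v h
  simp only
  rw [haff K L _ v h, hpe g hg]
end
end

section
/- Let n ≥ 1. Suppose K₀ is a convex body in ℝⁿ and x₀ is a point in the interior of K₀ such that A x₀ = x₀ for every similarity transformation A of ℝⁿ with A(K₀) = K₀. Then there exists a similarity-invariant point of the body p : Wₙ → ℝⁿ (i.e., p is continuous in the Hausdorff metric, satisfies p(A(K)) = A(p(K)) for every convex body K and every similarity transformation A, and p(K) ∈ K for every convex body K) such that p(K₀) = x₀. -/
/-! The point `p` is obtained by three constructions.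

* The *constrained Chebyshev center* `ccenter K Q` of two compact sets is the point of `K` whose
  farthest distance to `Q` is least; this farthest distance is the Hausdorff distance from the
  singleton `{x}` to `Q`. For convex `K` the minimizer is unique (`IsCCenter.unique`, by the
  parallelogram law), hence depends continuously on `(K, Q)` (`continuous_ccenter`), and it commutes
  with similarities (`IsCCenter.map`).
* `ccenter K K` and the corresponding radius normalize a body up to an orthogonal map. By `hfix`, the
  rule `g • K₀' ↦ g x₀'` is well defined on the orthogonal orbit of the normalized `K₀`. The orbit is
  compact, so the rule is continuous and extends by Tietze to a continuous `q` on all nonempty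
  compact sets (`exists_extension_orbit`).
* The extension `q` need not be equivariant. Instead of averaging it over the orthogonal group, one
  takes the compact set `cloud q K` of all candidates `g⁻¹ q (g • K')`, transported back to the frame
  of `K`. This set depends continuously and equivariantly on `K`, and is `{x₀}` for `K = K₀`.

Then `p K = ccenter K (cloud q K)`. -/

open Set TopologicalSpace

noncomputable section

/-- A similarity transformation of `ℝⁿ`: `x ↦ c • U x + v` with `c > 0`,
`U` an orthogonal linear transformation, and `v ∈ ℝⁿ`. -/
def IsSimilarity {n : ℕ} (A : Euc n → Euc n) : Prop :=
  ∃ (c : ℝ) (U : Euc n ≃ₗᵢ[ℝ] Euc n) (v : Euc n), 0 < c ∧ ∀ x, A x = c • U x + v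

open Filter Topology Metric

/-! ### Constrained Chebyshev centers -/

/-- Farthest-distance description of the Hausdorff distance to a singleton. -/
lemma dist_singleton_le_iff {n : ℕ} {x : Euc n} {Q : NonemptyCompacts (Euc n)} {r : ℝ} :
    dist ({x} : NonemptyCompacts (Euc n)) Q ≤ r ↔ ∀ y ∈ Q, dist x y ≤ r := by
  have hx : (({x} : NonemptyCompacts (Euc n)) : Set (Euc n)) = {x} := by
    ext y; simp
  rw [NonemptyCompacts.dist_eq, hx]
  constructor
  · intro h y hy
    have h1 := infDist_le_hausdorffDist_of_mem (s := (Q : Set (Euc n))) (t := {x}) (x := y) hy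
      (hausdorffEDist_ne_top_of_nonempty_of_bounded Q.nonempty (singleton_nonempty x)
        Q.isCompact.isBounded Bornology.isBounded_singleton)
    rw [infDist_singleton, dist_comm, hausdorffDist_comm] at h1
    exact h1.trans h
  · intro h
    obtain ⟨y, hy⟩ := Q.nonempty
    refine hausdorffDist_le_of_mem_dist (dist_nonneg.trans (h y hy)) ?_ ?_
    · rintro z rfl
      exact ⟨y, hy, h y hy⟩
    · intro z hz
      exact ⟨x, rfl, by rw [dist_comm]; exact h z hz⟩

lemma dist_singleton_map {n : ℕ} {Q Q' : NonemptyCompacts (Euc n)} {A : Euc n → Euc n} {a : ℝ}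
    (ha : 0 < a) (hA : ∀ x y, dist (A x) (A y) = a * dist x y)
    (hQ : (Q' : Set (Euc n)) = A '' Q) (x : Euc n) :
    dist ({A x} : NonemptyCompacts (Euc n)) Q' = a * dist ({x} : NonemptyCompacts (Euc n)) Q := by
  have hmem : ∀ z, z ∈ Q' ↔ ∃ y ∈ Q, A y = z := fun z => by
    rw [← SetLike.mem_coe, hQ]; rfl
  apply le_antisymm
  · rw [dist_singleton_le_iff]
    intro z hz
    obtain ⟨y, hy, rfl⟩ := (hmem z).1 hz
    rw [hA]
    exact mul_le_mul_of_nonneg_left (dist_singleton_le_iff.1 le_rfl y hy) ha.le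
  · rw [mul_comm, ← le_div_iff₀ ha, dist_singleton_le_iff]
    intro y hy
    rw [le_div_iff₀ ha, mul_comm, ← hA]
    exact dist_singleton_le_iff.1 le_rfl _ ((hmem _).2 ⟨y, hy, rfl⟩)

/-- `x` is a Chebyshev center of `Q` constrained to `K`: it minimizes over `K` the farthest distance
to `Q`, written as the Hausdorff distance from `{x}` to `Q`. -/
def IsCCenter {n : ℕ} (K Q : NonemptyCompacts (Euc n)) (x : Euc n) : Prop :=
  x ∈ K ∧ ∀ y ∈ K, dist ({x} : NonemptyCompacts (Euc n)) Q ≤ dist ({y} : NonemptyCompacts (Euc n)) Q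

lemma exists_isCCenter {n : ℕ} (K Q : NonemptyCompacts (Euc n)) : ∃ x, IsCCenter K Q x := by
  have hc : Continuous fun x : Euc n => dist ({x} : NonemptyCompacts (Euc n)) Q :=
    NonemptyCompacts.continuous_singleton.dist continuous_const
  obtain ⟨x, hx, h⟩ := K.isCompact.exists_isMinOn K.nonempty hc.continuousOn
  exact ⟨x, hx, fun y hy => h hy⟩

/-- A Chebyshev center of `Q` constrained to `K`; it is unique when `K` is convex. -/
def ccenter {n : ℕ} (K Q : NonemptyCompacts (Euc n)) : Euc n := (exists_isCCenter K Q).choose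

lemma isCCenter_ccenter {n : ℕ} (K Q : NonemptyCompacts (Euc n)) :
    IsCCenter K Q (ccenter K Q) := (exists_isCCenter K Q).choose_spec

lemma IsCCenter.unique {n : ℕ} {K Q : NonemptyCompacts (Euc n)}
    (hK : Convex ℝ (K : Set (Euc n))) {x y : Euc n}
    (hx : IsCCenter K Q x) (hy : IsCCenter K Q y) : x = y := by
  by_contra hne
  have hpos : 0 < dist x y := dist_pos.2 hne
  set r := dist ({x} : NonemptyCompacts (Euc n)) Q with hr
  have hry : dist ({y} : NonemptyCompacts (Euc n)) Q = r :=
    le_antisymm (hy.2 x hx.1) (hx.2 y hy.1)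
  have hm : (2⁻¹ : ℝ) • x + (2⁻¹ : ℝ) • y ∈ K :=
    hK hx.1 hy.1 (by norm_num) (by norm_num) (by norm_num)
  have hmin := hx.2 _ hm
  have hr0 : 0 ≤ r := dist_nonneg
  -- The parallelogram law bounds the farthest distance from the midpoint strictly below `r`.
  have hle : dist ({(2⁻¹ : ℝ) • x + (2⁻¹ : ℝ) • y} : NonemptyCompacts (Euc n)) Q
      ≤ √(r ^ 2 - dist x y ^ 2 / 4) := by
    rw [dist_singleton_le_iff]
    intro z hz
    apply Real.le_sqrt_of_sq_le
    have h1 : dist x z ≤ r := dist_singleton_le_iff.1 le_rfl z hz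
    have h2 : dist y z ≤ r := dist_singleton_le_iff.1 hry.le z hz
    have hp := parallelogram_law_with_norm ℝ (x - z) (y - z)
    have e1 : x - z + (y - z) = (2 : ℝ) • ((2⁻¹ : ℝ) • x + (2⁻¹ : ℝ) • y - z) := by
      module
    have e2 : x - z - (y - z) = x - y := by abel
    rw [e1, e2, norm_smul] at hp
    simp only [← dist_eq_norm, Real.norm_ofNat] at hp
    have h1' : dist x z ^ 2 ≤ r ^ 2 := pow_le_pow_left₀ dist_nonneg h1 2
    have h2' : dist y z ^ 2 ≤ r ^ 2 := pow_le_pow_left₀ dist_nonneg h2 2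
    nlinarith
  have hlt : √(r ^ 2 - dist x y ^ 2 / 4) < r := by
    by_cases h0 : 0 < r
    · rw [Real.sqrt_lt' h0]; nlinarith
    · have hr' : r = 0 := le_antisymm (not_lt.1 h0) hr0
      have h1 : ({x} : NonemptyCompacts (Euc n)) = Q := dist_eq_zero.1 hr'
      have h2 : ({y} : NonemptyCompacts (Euc n)) = Q := dist_eq_zero.1 (hry.trans hr')
      exact absurd (NonemptyCompacts.singleton_inj.1 (h1.trans h2.symm)) hne
  linarith

lemma IsCCenter.map {n : ℕ} {K L Q Q' : NonemptyCompacts (Euc n)} {A : Euc n → Euc n} {a : ℝ}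
    (ha : 0 < a) (hA : ∀ x y, dist (A x) (A y) = a * dist x y)
    (hL : (L : Set (Euc n)) = A '' K) (hQ : (Q' : Set (Euc n)) = A '' Q) {x : Euc n}
    (h : IsCCenter K Q x) : IsCCenter L Q' (A x) := by
  have hmem : ∀ z, z ∈ L ↔ ∃ y ∈ K, A y = z := fun z => by
    rw [← SetLike.mem_coe, hL]; rfl
  refine ⟨(hmem _).2 ⟨x, h.1, rfl⟩, fun z hz => ?_⟩
  obtain ⟨y, hy, rfl⟩ := (hmem z).1 hz
  rw [dist_singleton_map ha hA hQ, dist_singleton_map ha hA hQ]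
  exact mul_le_mul_of_nonneg_left (h.2 y hy) ha.le

lemma continuous_ccenter {n : ℕ} {X : Type*} [TopologicalSpace X]
    {K Q : X → NonemptyCompacts (Euc n)} (hK : Continuous K) (hQ : Continuous Q)
    (hconv : ∀ a, Convex ℝ (K a : Set (Euc n))) : Continuous fun a => ccenter (K a) (Q a) := by
  rw [continuous_iff_continuousAt]
  intro a
  obtain ⟨r, hr⟩ := (K a).isCompact.isBounded.subset_ball 0
  have hbd : ∀ᶠ b in 𝓝 a, ccenter (K b) (Q b) ∈ closedBall (0 : Euc n) r := by
    have := hK.continuousAt.eventually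
      ((NonemptyCompacts.isOpen_subsets_of_isOpen (isOpen_ball (x := (0 : Euc n)))).mem_nhds hr)
    filter_upwards [this] with b hb
    exact ball_subset_closedBall (hb (isCCenter_ccenter _ _).1)
  refine (isCompact_closedBall (0 : Euc n) r).tendsto_nhds_of_unique_mapClusterPt hbd ?_
  -- By uniqueness it suffices that every cluster point of the centers is a center of the limit.
  intro z _ hz
  refine IsCCenter.unique (hconv a) ⟨?_, ?_⟩ (isCCenter_ccenter (K a) (Q a))
  · have hcl : IsClosed (K a : Set (Euc n)) := (K a).isCompact.isClosed
    rw [← SetLike.mem_coe, hcl.mem_iff_infDist_zero (K a).nonempty]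
    by_contra hne
    have hc : Continuous fun p : Euc n × X => infDist p.1 (K p.2 : Set (Euc n)) :=
      (lipschitz_infDist (α := Euc n)).continuous.comp
        (g := fun p : Euc n × NonemptyCompacts (Euc n) => infDist p.1 (p.2 : Set (Euc n)))
        (f := fun p : Euc n × X => (p.1, K p.2))
        (continuous_fst.prodMk (hK.comp continuous_snd))
    have hev : ∀ᶠ p : Euc n × X in 𝓝 (z, a), infDist p.1 (K p.2 : Set (Euc n)) ≠ 0 :=
      (hc.continuousAt (x := (z, a))).eventually_ne hne
    rw [nhds_prod_eq] at hev
    obtain ⟨P, hP, P', hP', h⟩ := eventually_prod_iff.1 hev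
    obtain ⟨b, hb, hb'⟩ := ((mapClusterPt_iff_frequently.1 hz _ hP).and_eventually hP').exists
    exact h hb hb' (infDist_zero_of_mem (isCCenter_ccenter (K b) (Q b)).1)
  · intro y hy
    by_contra! hlt
    obtain ⟨t, ht1, ht2⟩ := exists_between hlt
    have hc : Continuous fun p : Euc n × X =>
        dist ({p.1} : NonemptyCompacts (Euc n)) (Q p.2) :=
      (NonemptyCompacts.continuous_singleton.comp continuous_fst).dist (hQ.comp continuous_snd)
    have hev1 : ∀ᶠ p : Euc n × X in 𝓝 y ×ˢ 𝓝 a,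
        dist ({p.1} : NonemptyCompacts (Euc n)) (Q p.2) < t := by
      rw [← nhds_prod_eq]
      exact (hc.continuousAt (x := (y, a))).eventually_lt_const ht1
    have hev2 : ∀ᶠ p : Euc n × X in 𝓝 z ×ˢ 𝓝 a,
        t < dist ({p.1} : NonemptyCompacts (Euc n)) (Q p.2) := by
      rw [← nhds_prod_eq]
      exact (hc.continuousAt (x := (z, a))).eventually_const_lt ht2
    obtain ⟨P, hP, P', hP', h⟩ := eventually_prod_iff.1 hev1
    obtain ⟨R, hR, R', hR', h'⟩ := eventually_prod_iff.1 hev2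
    obtain ⟨U, hU, hUo, hyU⟩ := _root_.eventually_nhds_iff.1 hP
    have hmeet : ∀ᶠ b in 𝓝 a, ((K b : Set (Euc n)) ∩ U).Nonempty :=
      hK.continuousAt.eventually
        ((NonemptyCompacts.isOpen_inter_nonempty_of_isOpen hUo).mem_nhds ⟨y, hy, hyU⟩)
    obtain ⟨b, hb, ⟨hb1, hb2⟩, w, hwK, hwU⟩ :=
      ((mapClusterPt_iff_frequently.1 hz _ hR).and_eventually
        ((hP'.and hR').and hmeet)).exists
    have h1 := h (hU w hwU) hb1
    have h2 := h' hb hb2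
    have h3 := (isCCenter_ccenter (K b) (Q b)).2 w hwK
    simp only at h1 h2
    linarith

/-! ### The orthogonal group and its orbits of compact sets -/

/-- The orthogonal group of `ℝⁿ`, as a topological group of continuous linear maps. -/
abbrev Orth (n : ℕ) := unitary (Euc n →L[ℝ] Euc n)

instance continuousStar_clm (n : ℕ) : ContinuousStar (Euc n →L[ℝ] Euc n) :=
  ⟨(ContinuousLinearMap.adjoint (𝕜 := ℝ) (E := Euc n) (F := Euc n)).continuous⟩

instance compactSpace_orth (n : ℕ) : CompactSpace (Orth n) := by
  rw [← isCompact_univ_iff, Subtype.isCompact_iff]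
  refine (isCompact_closedBall (0 : Euc n →L[ℝ] Euc n) 1).of_isClosed_subset ?_ ?_
  · simpa using! isClosed_unitary (R := Euc n →L[ℝ] Euc n)
  · rintro _ ⟨g, -, rfl⟩
    rw [mem_closedBall_zero_iff]
    refine ContinuousLinearMap.opNorm_le_bound _ zero_le_one fun x => ?_
    rw [one_mul]
    exact (Unitary.norm_map g x).le

lemma orth_mul_apply {n : ℕ} (g h : Orth n) (x : Euc n) :
    ((g * h : Orth n) : Euc n →L[ℝ] Euc n) x
      = (g : Euc n →L[ℝ] Euc n) ((h : Euc n →L[ℝ] Euc n) x) := rfl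

lemma orth_inv_apply_self {n : ℕ} (g : Orth n) (x : Euc n) :
    ((g⁻¹ : Orth n) : Euc n →L[ℝ] Euc n) ((g : Euc n →L[ℝ] Euc n) x) = x := by
  rw [← orth_mul_apply, inv_mul_cancel]; rfl

lemma orth_apply_inv_self {n : ℕ} (g : Orth n) (x : Euc n) :
    (g : Euc n →L[ℝ] Euc n) (((g⁻¹ : Orth n) : Euc n →L[ℝ] Euc n) x) = x := by
  rw [← orth_mul_apply, mul_inv_cancel]; rfl

/-- The image of `K` under the affine map `y ↦ s • g (y - c)`. -/
def frame {n : ℕ} (g : Orth n) (s : ℝ) (c : Euc n) (K : NonemptyCompacts (Euc n)) :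
    NonemptyCompacts (Euc n) :=
  K.map (fun y => s • (g : Euc n →L[ℝ] Euc n) (y - c)) (by fun_prop)

lemma coe_frame {n : ℕ} (g : Orth n) (s : ℝ) (c : Euc n) (K : NonemptyCompacts (Euc n)) :
    (frame g s c K : Set (Euc n)) = (fun y => s • (g : Euc n →L[ℝ] Euc n) (y - c)) '' K := rfl

lemma continuous_frame {n : ℕ} {X : Type*} [TopologicalSpace X] {g : X → Orth n} {s : X → ℝ}
    {c : X → Euc n} {K : X → NonemptyCompacts (Euc n)} (hg : Continuous g) (hs : Continuous s)
    (hc : Continuous c) (hK : Continuous K) :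
    Continuous fun x => frame (g x) (s x) (c x) (K x) := by
  unfold frame
  refine Continuous.nonemptyCompacts_map' (g := fun x y =>
    s x • (g x : Euc n →L[ℝ] Euc n) (y - c x)) hK ?_
  simp only [Function.uncurry_def]
  exact (hs.comp continuous_fst).smul
    ((continuous_subtype_val.comp (hg.comp continuous_fst)).clm_apply
      (continuous_snd.sub (hc.comp continuous_fst)))

/-- If `frame g s c K ↦ g x` is well defined on the set of all `frame g s c K`, it is continuous there,
because this set is a compact quotient of the orthogonal group; Tietze then extends it. -/
lemma exists_extension_orbit {n : ℕ} (s : ℝ) (c x : Euc n) (K : NonemptyCompacts (Euc n))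
    (h : ∀ g g' : Orth n, frame g s c K = frame g' s c K →
      (g : Euc n →L[ℝ] Euc n) x = (g' : Euc n →L[ℝ] Euc n) x) :
    ∃ q : C(NonemptyCompacts (Euc n), Euc n),
      ∀ g : Orth n, q (frame g s c K) = (g : Euc n →L[ℝ] Euc n) x := by
  have hφ : Continuous fun g : Orth n => frame g s c K :=
    continuous_frame continuous_id continuous_const continuous_const continuous_const
  let φ : C(Orth n, range (fun g : Orth n => frame g s c K)) :=
    ⟨rangeFactorization _, hφ.subtype_mk _⟩
  have hquot : IsQuotientMap φ :=
    φ.continuous.isClosedMap.isQuotientMap φ.continuous rangeFactorization_surjective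
  have hev : Continuous fun g : Orth n => (g : Euc n →L[ℝ] Euc n) x := by fun_prop
  let ev : C(Orth n, Euc n) := ⟨fun g : Orth n => (g : Euc n →L[ℝ] Euc n) x, hev⟩
  have hcompat : Function.FactorsThrough ev φ := fun g g' hgg =>
    h g g' (congrArg Subtype.val hgg)
  let f : C(range (fun g : Orth n => frame g s c K), Euc n) :=
    hquot.lift ev hcompat
  have hf : ∀ g, f (φ g) = (g : Euc n →L[ℝ] Euc n) x := fun g =>
    congrArg (fun k : C(Orth n, Euc n) => k g) (hquot.lift_comp ev hcompat)
  have : TietzeExtension (Euc n) := TietzeExtension.of_tvs ℝ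
  obtain ⟨q, hq⟩ := f.exists_restrict_eq (isCompact_range hφ).isClosed
  refine ⟨q, fun g => ?_⟩
  rw [← hf g, ← hq]
  rfl

/-! ### The equivariant cloud of candidate points -/

/-- The circumscribed radius: the farthest distance from the Chebyshev center of `K` to `K`. -/
def crad {n : ℕ} (K : NonemptyCompacts (Euc n)) : ℝ :=
  dist ({ccenter K K} : NonemptyCompacts (Euc n)) K

lemma crad_pos {n : ℕ} (hn : 1 ≤ n) (K : ConvBody n) : 0 < crad K.1 := by
  refine dist_pos.2 fun h => ?_
  have : Nonempty (Fin n) := ⟨⟨0, hn⟩⟩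
  have hs : (K.1 : Set (Euc n)) = {ccenter K.1 K.1} := by
    conv_lhs => rw [← h]
    ext y; simp
  have := K.2.2
  rw [hs, interior_singleton] at this
  exact not_nonempty_empty this

/-- All candidate points for `K`: for each orthogonal `g`, the value of `q` at the `g`-rotated
normalization of `K`, carried back to the frame of `K`. -/
def cloud {n : ℕ} (q : C(NonemptyCompacts (Euc n), Euc n)) (K : NonemptyCompacts (Euc n)) :
    NonemptyCompacts (Euc n) :=
  (⊤ : NonemptyCompacts (Orth n)).map
    (fun g => ccenter K K + crad K • ((g⁻¹ : Orth n) : Euc n →L[ℝ] Euc n)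
      (q (frame g (crad K)⁻¹ (ccenter K K) K)))
    (by
      have h := q.continuous.comp (continuous_frame (continuous_id (X := Orth n))
        (continuous_const (y := (crad K)⁻¹)) (continuous_const (y := ccenter K K))
        (continuous_const (y := K)))
      have h' : Continuous fun g : Orth n => ((g⁻¹ : Orth n) : Euc n →L[ℝ] Euc n) :=
        continuous_subtype_val.comp continuous_inv
      exact continuous_const.add ((h'.clm_apply h).const_smul (crad K)))

lemma mem_cloud {n : ℕ} (q : C(NonemptyCompacts (Euc n), Euc n)) (K : NonemptyCompacts (Euc n))
    (z : Euc n) : z ∈ cloud q K ↔ ∃ g : Orth n,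
      ccenter K K + crad K • ((g⁻¹ : Orth n) : Euc n →L[ℝ] Euc n)
        (q (frame g (crad K)⁻¹ (ccenter K K) K)) = z := by
  rw [← SetLike.mem_coe, cloud, NonemptyCompacts.coe_map, NonemptyCompacts.coe_top, image_univ]
  rfl

lemma continuous_cloud {n : ℕ} (hn : 1 ≤ n) (q : C(NonemptyCompacts (Euc n), Euc n)) :
    Continuous fun K : ConvBody n => cloud q K.1 := by
  have hc : Continuous fun K : ConvBody n => ccenter K.1 K.1 :=
    continuous_ccenter continuous_subtype_val continuous_subtype_val fun K => K.2.1
  have hr : Continuous fun K : ConvBody n => crad K.1 :=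
    (NonemptyCompacts.continuous_singleton.comp hc).dist continuous_subtype_val
  have hri : Continuous fun K : ConvBody n => (crad K.1)⁻¹ :=
    hr.inv₀ fun K => (crad_pos hn K).ne'
  unfold cloud
  refine Continuous.nonemptyCompacts_map' (g := fun (K : ConvBody n) (g : Orth n) =>
    ccenter K.1 K.1 + crad K.1 • ((g⁻¹ : Orth n) : Euc n →L[ℝ] Euc n)
        (q (frame g (crad K.1)⁻¹ (ccenter K.1 K.1) K.1))) continuous_const ?_
  simp only [Function.uncurry_def]
  exact (hc.comp continuous_fst).add ((hr.comp continuous_fst).smul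
      ((continuous_subtype_val.comp (continuous_inv.comp continuous_snd)).clm_apply
        (q.continuous.comp (continuous_frame continuous_snd (hri.comp continuous_fst)
          (hc.comp continuous_fst) (continuous_subtype_val.comp continuous_fst)))))

/-- Equivariance of the cloud: the rotational part of the similarity is absorbed by reindexing the
orthogonal group. -/
lemma cloud_map {n : ℕ} (q : C(NonemptyCompacts (Euc n), Euc n)) {K L : ConvBody n} {a : ℝ}
    (ha : 0 < a) (u : Orth n) (v : Euc n)
    (hL : (L.1 : Set (Euc n)) = (fun x => a • (u : Euc n →L[ℝ] Euc n) x + v) '' K.1) :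
    (cloud q L.1 : Set (Euc n))
      = (fun x => a • (u : Euc n →L[ℝ] Euc n) x + v) '' cloud q K.1 := by
  set A : Euc n → Euc n := fun x => a • (u : Euc n →L[ℝ] Euc n) x + v with hAdef
  have hA : ∀ x y, dist (A x) (A y) = a * dist x y := fun x y => by
    simp only [hAdef, dist_add_right, dist_smul₀, Real.norm_of_nonneg ha.le]
    rw [dist_eq_norm, ← map_sub, Unitary.norm_map, ← dist_eq_norm]
  have hc : ccenter L.1 L.1 = A (ccenter K.1 K.1) :=
    (isCCenter_ccenter L.1 L.1).unique L.2.1 ((isCCenter_ccenter K.1 K.1).map ha hA hL hL)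
  have hr : crad L.1 = a * crad K.1 := by
    rw [crad, hc, dist_singleton_map ha hA hL, crad]
  have hframe : ∀ g : Orth n, frame g (crad L.1)⁻¹ (ccenter L.1 L.1) L.1
      = frame (g * u) (crad K.1)⁻¹ (ccenter K.1 K.1) K.1 := fun g => by
    apply NonemptyCompacts.ext
    rw [coe_frame, coe_frame, hL, image_image, hc, hr]
    refine image_congr fun y _ => ?_
    have e : A y - A (ccenter K.1 K.1)
        = a • (u : Euc n →L[ℝ] Euc n) (y - ccenter K.1 K.1) := by
      simp only [hAdef, map_sub, smul_sub]; abel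
    rw [e, map_smul, smul_smul, orth_mul_apply, mul_inv, mul_comm a⁻¹, mul_assoc,
      inv_mul_cancel₀ ha.ne', mul_one]
  have hpt : ∀ g : Orth n, ccenter L.1 L.1 + crad L.1 • ((g⁻¹ : Orth n) : Euc n →L[ℝ] Euc n)
        (q (frame g (crad L.1)⁻¹ (ccenter L.1 L.1) L.1))
      = A (ccenter K.1 K.1 + crad K.1 • (((g * u)⁻¹ : Orth n) : Euc n →L[ℝ] Euc n)
        (q (frame (g * u) (crad K.1)⁻¹ (ccenter K.1 K.1) K.1))) := fun g => by
    rw [hframe, hc, hr]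
    simp only [hAdef]
    rw [mul_inv_rev, orth_mul_apply, map_add, map_smul, orth_apply_inv_self, smul_add, smul_smul]
    abel
  ext z
  rw [SetLike.mem_coe, mem_cloud]
  constructor
  · rintro ⟨g, rfl⟩
    exact ⟨_, (mem_cloud q K.1 _).2 ⟨g * u, rfl⟩, (hpt g).symm⟩
  · rintro ⟨w, hw, rfl⟩
    obtain ⟨g, rfl⟩ := (mem_cloud q K.1 w).1 hw
    refine ⟨g * u⁻¹, ?_⟩
    rw [hpt, inv_mul_cancel_right]

/-! ### The invariant point -/

theorem stmt4 (n : ℕ) (hn : 1 ≤ n)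
    (K₀ : ConvBody n) (x₀ : Euc n)
    (hx₀ : x₀ ∈ interior (K₀.1 : Set (Euc n)))
    (hfix : ∀ A : Euc n → Euc n, IsSimilarity A →
      A '' (K₀.1 : Set (Euc n)) = (K₀.1 : Set (Euc n)) → A x₀ = x₀) :
    ∃ p : ConvBody n → Euc n,
      Continuous p ∧
      (∀ K L : ConvBody n, ∀ A : Euc n → Euc n, IsSimilarity A →
        (L.1 : Set (Euc n)) = A '' (K.1 : Set (Euc n)) → p L = A (p K)) ∧
      (∀ K : ConvBody n, p K ∈ (K.1 : Set (Euc n))) ∧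
      p K₀ = x₀ := by
  set c := ccenter K₀.1 K₀.1 with hc
  set r := crad K₀.1 with hr
  have hr0 : r ≠ 0 := (crad_pos hn K₀).ne'
  obtain ⟨q, hq⟩ := exists_extension_orbit r⁻¹ c (r⁻¹ • (x₀ - c)) K₀.1 (fun g g' h => by
    -- Two rotations with the same image of `K₀` differ by a symmetry of `K₀` centred at `c`.
    let A : Euc n → Euc n := fun x =>
      (1 : ℝ) • Unitary.linearIsometryEquiv (g⁻¹ * g') x
        + (c - Unitary.linearIsometryEquiv (g⁻¹ * g') c)
    have hAeq : ∀ x, A x = c + ((g⁻¹ : Orth n) : Euc n →L[ℝ] Euc n)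
        ((g' : Euc n →L[ℝ] Euc n) (x - c)) := fun x => by
      change (1 : ℝ) • ((g⁻¹ * g' : Orth n) : Euc n →L[ℝ] Euc n) x
        + (c - ((g⁻¹ * g' : Orth n) : Euc n →L[ℝ] Euc n) c) = _
      rw [orth_mul_apply, orth_mul_apply, map_sub, map_sub, one_smul]
      abel
    have hAK : A '' (K₀.1 : Set (Euc n)) = K₀.1 := by
      have h' := congrArg (fun S : NonemptyCompacts (Euc n) =>
        (fun y => c + r • ((g⁻¹ : Orth n) : Euc n →L[ℝ] Euc n) y) '' (S : Set (Euc n))) h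
      simp only [coe_frame, image_image, map_smul, smul_smul, mul_inv_cancel₀ hr0, one_smul,
        orth_inv_apply_self, add_sub_cancel, image_id'] at h'
      simp only [hAeq]
      exact h'.symm
    have hfx := hfix A ⟨1, _, _, one_pos, fun x => rfl⟩ hAK
    rw [hAeq] at hfx
    have e := congrArg (g : Euc n →L[ℝ] Euc n) (eq_sub_of_add_eq' hfx)
    rw [orth_apply_inv_self] at e
    rw [map_smul, map_smul, e])
  refine ⟨fun K => ccenter K.1 (cloud q K.1), ?_, ?_, ?_, ?_⟩
  · exact continuous_ccenter continuous_subtype_val (continuous_cloud hn q) fun K => K.2.1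
  · rintro K L A ⟨a, U, v, ha, hAx⟩ hL
    have hA' : A = fun x =>
        a • ((Unitary.linearIsometryEquiv.symm U : Orth n) : Euc n →L[ℝ] Euc n) x + v :=
      funext hAx
    have hd : ∀ x y, dist (A x) (A y) = a * dist x y := fun x y => by
      rw [hAx, hAx, dist_add_right, dist_smul₀, Real.norm_of_nonneg ha.le, U.dist_map]
    have hQ : (cloud q L.1 : Set (Euc n)) = A '' cloud q K.1 := by
      rw [hA'] at hL ⊢
      exact cloud_map q ha _ v hL
    exact (isCCenter_ccenter _ _).unique L.2.1 ((isCCenter_ccenter _ _).map ha hd hL hQ)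
  · exact fun K => (isCCenter_ccenter _ _).1
  · have hcloud : cloud q K₀.1 = {x₀} := by
      apply NonemptyCompacts.ext
      ext z
      rw [SetLike.mem_coe, SetLike.mem_coe, mem_cloud, NonemptyCompacts.mem_singleton]
      simp only [← hc, ← hr, hq, orth_inv_apply_self, smul_smul, mul_inv_cancel₀ hr0, one_smul,
        add_sub_cancel, exists_const]
      exact eq_comm
    refine (isCCenter_ccenter _ _).unique K₀.2.1 ⟨interior_subset hx₀, fun y _ => ?_⟩
    rw [hcloud, dist_self]
    exact dist_nonneg
end
end

section
/- Let n ≥ 3. There exists a convex body K in ℝⁿ such that the set S(K) = { p(K) : p is a similarity-invariant point of the body } is not equal to the convex hull of any finite set of points; in particular, S(K) is not the convex hull of finitely many similarity-invariant points of K. -/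
/-!
The body `K` is the closed convex hull of the unit ball and two spikes `(3/2) e`, `(5/4) f`, where
`e`, `f` are orthonormal. Every point of `K` in the plane of `e` and `f` turns out to be a value
`p K` of a similarity-invariant point `p`. Infinitely many of these points are extreme in `K`,
hence extreme in `S(K) ⊆ K`, whereas the convex hull of a finite set `F` has all its extreme points
in `F`.

*Producing invariant points* (`exists_invPoint`). Let `a ∈ K` be such that the orbit map
`T K ↦ T a`, over the similarities `T`, satisfies `|a - T a| ≤ C d_H(K, T K)` (`Stable`). The
function `E(L, x) = sup_T (|x - T a| - C d_H(L, T K))` is a McShane-type extension of the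
distance to `a` along the orbit: it is Lipschitz in both variables, convex in `x`, equivariant,
and `E(K, a) ≤ 0`, `E(K, x) ≥ |x - a|`. With `D(x, L)` the distance to the farthest point of `L`,
the function `J(L, x) = D(x, L)² + 2 diam(L) E(L, x)` is continuous, strictly midpoint-convex in
`x` and homogeneous under similarities. Its minimizer over `L` is therefore unique, equivariant
and continuous in `L`, and it lies in `L`. For `L = K` the second term is an exact penalty, so the
minimizer is `a`.

*Stability* (`spike_stable`). Suppose that a similarity `x ↦ c U x + v` moves `K` by `δ` in the
Hausdorff distance. Comparing diameters gives `|c - 1| ≤ δ`. Enough supporting hyperplanes of the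
unit ball also support `K` to force `|v| = O(δ)`. Finally `(3/2) e` is the sharp farthest point of
`K` from the origin and `(5/4) f` the sharp farthest point from the line `ℝ e`, so `U` moves `e`
and `f` by `O(δ)`.

*Extreme points* (`spike_extreme`). A unit vector `a = -(α e + β f)` with `α, β ≥ 0` lies on the
boundary of a ball of radius `7/2` that contains `K`.
-/

open Set TopologicalSpace

noncomputable section

/-- `p : Wₙ → ℝⁿ` is a similarity-invariant point of the body. -/
def IsSimInvBodyPoint {n : ℕ} (p : ConvBody n → Euc n) : Prop :=
  Continuous p ∧
  (∀ K L : ConvBody n, ∀ A : Euc n → Euc n, IsSimilarity A →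
    (L.1 : Set (Euc n)) = A '' (K.1 : Set (Euc n)) → p L = A (p K)) ∧
  (∀ K : ConvBody n, p K ∈ (K.1 : Set (Euc n)))

section
variable {n : ℕ}

/-! ### Hausdorff distance -/

/-- The space of nonempty compact subsets of `ℝⁿ` with the Hausdorff metric. -/
abbrev NC (n : ℕ) := NonemptyCompacts (Euc n)

lemma exists_near (X Y : NC n) {x : Euc n} (hx : x ∈ X) : ∃ y ∈ Y, dist x y ≤ dist X Y := by
  obtain ⟨y, hy, h⟩ := Y.isCompact.exists_infDist_eq_dist Y.nonempty x
  refine ⟨y, hy, ?_⟩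
  rw [← h, Metric.NonemptyCompacts.dist_eq]
  exact Metric.infDist_le_hausdorffDist_of_mem hx
    (Metric.hausdorffEDist_ne_top_of_nonempty_of_bounded X.nonempty Y.nonempty
      X.isCompact.isBounded Y.isCompact.isBounded)

lemma dist_le_of_near {X Y : NC n} {r : ℝ} (hr : 0 ≤ r)
    (h₁ : ∀ x ∈ X, ∃ y ∈ Y, dist x y ≤ r) (h₂ : ∀ y ∈ Y, ∃ x ∈ X, dist y x ≤ r) :
    dist X Y ≤ r := by
  rw [Metric.NonemptyCompacts.dist_eq]
  exact Metric.hausdorffDist_le_of_mem_dist hr h₁ h₂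

lemma dist_le_farDist {x y : Euc n} {L : NC n} (hy : y ∈ L) :
    dist x y ≤ dist ({x} : NC n) L := by
  obtain ⟨z, hz, h⟩ := exists_near L {x} hy
  rw [NonemptyCompacts.mem_singleton] at hz
  subst hz
  rwa [dist_comm, dist_comm {z} L]

lemma farDist_le {x : Euc n} {L : NC n} {r : ℝ} (h : ∀ y ∈ L, dist x y ≤ r) :
    dist ({x} : NC n) L ≤ r := by
  obtain ⟨y, hy⟩ := L.nonempty
  refine dist_le_of_near (dist_nonneg.trans (h y hy)) ?_ ?_
  · intro z hz
    rw [NonemptyCompacts.mem_singleton] at hz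
    subst hz
    exact ⟨y, hy, h y hy⟩
  · intro z hz
    exact ⟨x, by simp, by rw [dist_comm]; exact h z hz⟩

/-! ### The action of similarities -/

lemma IsSimilarity.comp {A B : Euc n → Euc n} (hA : IsSimilarity A) (hB : IsSimilarity B) :
    IsSimilarity (A ∘ B) := by
  obtain ⟨c, U, v, hc, hA⟩ := hA
  obtain ⟨d, V, w, hd, hB⟩ := hB
  refine ⟨c * d, V.trans U, c • U w + v, by positivity, fun x => ?_⟩
  simp [hA, hB, smul_smul, add_assoc]

lemma isSimilarity_id : IsSimilarity (id : Euc n → Euc n) :=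
  ⟨1, LinearIsometryEquiv.refl ℝ _, 0, one_pos, by simp⟩

lemma IsSimilarity.exists_inv {A : Euc n → Euc n} (hA : IsSimilarity A) :
    ∃ B : Euc n → Euc n, IsSimilarity B ∧ (∀ x, A (B x) = x) ∧ ∀ x, B (A x) = x := by
  obtain ⟨c, U, v, hc, hA⟩ := hA
  refine ⟨fun x => c⁻¹ • U.symm x + (-(c⁻¹ • U.symm v)),
    ⟨c⁻¹, U.symm, _, by positivity, fun x => rfl⟩, fun x => ?_, fun x => ?_⟩
  · simp [hA, smul_smul, hc.ne']
  · simp [hA, smul_smul, hc.ne']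

/-- The ratio of a similarity, in metric form. -/
lemma IsSimilarity.exists_ratio {A : Euc n → Euc n} (hA : IsSimilarity A) :
    ∃ c : ℝ, 0 < c ∧ ∀ x y, dist (A x) (A y) = c * dist x y := by
  obtain ⟨c, U, v, hc, hA⟩ := hA
  refine ⟨c, hc, fun x y => ?_⟩
  rw [hA, hA, dist_add_right, dist_smul₀, Real.norm_of_nonneg hc.le, U.dist_map]

lemma IsSimilarity.continuous {A : Euc n → Euc n} (hA : IsSimilarity A) : Continuous A := by
  obtain ⟨c, U, v, hc, hA⟩ := hA
  rw [funext hA]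
  fun_prop

/-- The image of a compact set under a similarity. -/
def simImage {A : Euc n → Euc n} (hA : IsSimilarity A) (L : NC n) : NC n :=
  L.map A hA.continuous

lemma mem_simImage {A : Euc n → Euc n} {hA : IsSimilarity A} {L : NC n} {y : Euc n} :
    y ∈ simImage hA L ↔ ∃ x ∈ L, A x = y := Iff.rfl

lemma simImage_comp {A B : Euc n → Euc n} (hA : IsSimilarity A) (hB : IsSimilarity B) (L : NC n) :
    simImage (hA.comp hB) L = simImage hA (simImage hB L) :=
  NonemptyCompacts.map_comp A B hA.continuous hB.continuous L

lemma simImage_id (L : NC n) : simImage isSimilarity_id L = L := NonemptyCompacts.map_id L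

lemma simImage_singleton {A : Euc n → Euc n} (hA : IsSimilarity A) (x : Euc n) :
    simImage hA {x} = {A x} := NonemptyCompacts.map_singleton hA.continuous x

lemma dist_simImage {A : Euc n → Euc n} (hA : IsSimilarity A) {c : ℝ} (hc : 0 < c)
    (hd : ∀ x y, dist (A x) (A y) = c * dist x y) (X Y : NC n) :
    dist (simImage hA X) (simImage hA Y) = c * dist X Y := by
  apply le_antisymm
  · apply dist_le_of_near (by positivity)
    · rintro _ ⟨x, hx, rfl⟩
      obtain ⟨y, hy, h⟩ := exists_near X Y hx
      exact ⟨A y, ⟨y, hy, rfl⟩, by rw [hd]; gcongr⟩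
    · rintro _ ⟨y, hy, rfl⟩
      obtain ⟨x, hx, h⟩ := exists_near Y X hy
      exact ⟨A x, ⟨x, hx, rfl⟩, by rw [hd, dist_comm X Y]; gcongr⟩
  · rw [mul_comm, ← le_div_iff₀ hc]
    apply dist_le_of_near (by positivity)
    · intro x hx
      obtain ⟨_, ⟨y, hy, rfl⟩, h⟩ := exists_near _ (simImage hA Y)
        (mem_simImage (hA := hA).2 ⟨x, hx, rfl⟩)
      exact ⟨y, hy, by rw [le_div_iff₀ hc, mul_comm, ← hd]; exact h⟩
    · intro y hy
      obtain ⟨_, ⟨x, hx, rfl⟩, h⟩ := exists_near _ (simImage hA X)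
        (mem_simImage (hA := hA).2 ⟨y, hy, rfl⟩)
      exact ⟨x, hx, by rw [le_div_iff₀ hc, mul_comm, ← hd, dist_comm (simImage hA X)]; exact h⟩

lemma diam_simImage {A : Euc n → Euc n} (hA : IsSimilarity A) {c : ℝ} (hc : 0 < c)
    (hd : ∀ x y, dist (A x) (A y) = c * dist x y) (X : NC n) :
    Metric.diam (simImage hA X : Set (Euc n)) = c * Metric.diam (X : Set (Euc n)) := by
  apply le_antisymm
  · apply Metric.diam_le_of_forall_dist_le (by positivity)
    rintro _ ⟨x, hx, rfl⟩ _ ⟨y, hy, rfl⟩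
    rw [hd]
    gcongr
    exact Metric.dist_le_diam_of_mem X.isCompact.isBounded hx hy
  · rw [mul_comm, ← le_div_iff₀ hc]
    apply Metric.diam_le_of_forall_dist_le (by positivity)
    intro x hx y hy
    rw [le_div_iff₀ hc, mul_comm, ← hd]
    exact Metric.dist_le_diam_of_mem (simImage hA X).isCompact.isBounded
      ⟨x, hx, rfl⟩ ⟨y, hy, rfl⟩

lemma diam_le_add (X Y : NC n) :
    Metric.diam (X : Set (Euc n)) ≤ Metric.diam (Y : Set (Euc n)) + 2 * dist X Y := by
  apply Metric.diam_le_of_forall_dist_le (by positivity)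
  intro x hx y hy
  obtain ⟨x', hx', h₁⟩ := exists_near X Y hx
  obtain ⟨y', hy', h₂⟩ := exists_near X Y hy
  have := Metric.dist_le_diam_of_mem Y.isCompact.isBounded hx' hy'
  have := dist_triangle4 x x' y' y
  rw [dist_comm y y'] at h₂
  linarith

lemma continuous_diam : Continuous fun L : NC n => Metric.diam (L : Set (Euc n)) := by
  refine (LipschitzWith.of_le_add_mul 2 fun X Y => ?_).continuous
  exact_mod_cast diam_le_add X Y

/-! ### Invariant points through a prescribed value -/

/-- For a reference body `K`, a point `a` and a constant `C`, the McShane-type function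
`E(L, x) = sup_T (|x - T a| - C d_H(L, T K))`, the supremum over all similarities `T`. -/
def mcShane (K : NC n) (a : Euc n) (C : ℝ) (L : NC n) (x : Euc n) : ℝ :=
  ⨆ T : {A : Euc n → Euc n // IsSimilarity A}, (dist x (T.1 a) - C * dist L (simImage T.2 K))

/-- The objective `J(L, x) = D(x, L)² + 2 diam(L) E(L, x)`, where `D(x, L)` is the distance from
`x` to the farthest point of `L`, encoded as the Hausdorff distance from `{x}` to `L`. -/
def objective (K : NC n) (a : Euc n) (C : ℝ) (L : NC n) (x : Euc n) : ℝ :=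
  dist ({x} : NC n) L ^ 2 + 2 * Metric.diam (L : Set (Euc n)) * mcShane K a C L x

/-- The orbit map `T K ↦ T a` is Lipschitz at `K` with constant `C`. By equivariance it is then
`C`-Lipschitz on the whole orbit of `K`. -/
def Stable (K : NC n) (a : Euc n) (C : ℝ) : Prop :=
  0 ≤ C ∧ ∀ (T : Euc n → Euc n) (hT : IsSimilarity T), dist a (T a) ≤ C * dist K (simImage hT K)

section
variable {K : NC n} {a : Euc n} {C : ℝ}

lemma bddAbove_mcShane (hs : Stable K a C) (L : NC n) (x : Euc n) :
    BddAbove (range fun T : {A : Euc n → Euc n // IsSimilarity A} =>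
      dist x (T.1 a) - C * dist L (simImage T.2 K)) := by
  refine ⟨dist x a + C * dist K L, ?_⟩
  rintro _ ⟨T, rfl⟩
  have h₁ := hs.2 T.1 T.2
  have h₂ := dist_triangle x a (T.1 a)
  have h₃ := mul_le_mul_of_nonneg_left (dist_triangle K L (simImage T.2 K)) hs.1
  simp only
  linarith

lemma mcShane_le_add (hs : Stable K a C) (L M : NC n) (x y : Euc n) :
    mcShane K a C L x ≤ mcShane K a C M y + (dist x y + C * dist L M) := by
  have : Nonempty {A : Euc n → Euc n // IsSimilarity A} := ⟨⟨id, isSimilarity_id⟩⟩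
  refine ciSup_le fun T => ?_
  have h₁ := le_ciSup (bddAbove_mcShane hs M y) T
  have h₂ := dist_triangle x y (T.1 a)
  have h₃ := mul_le_mul_of_nonneg_left (dist_triangle_left M (simImage T.2 K) L) hs.1
  have h₄ : mcShane K a C M y = ⨆ T : {A : Euc n → Euc n // IsSimilarity A},
    (dist y (T.1 a) - C * dist M (simImage T.2 K)) := rfl
  linarith

lemma continuous_mcShane (hs : Stable K a C) :
    Continuous fun p : NC n × Euc n => mcShane K a C p.1 p.2 := by
  refine (LipschitzWith.of_le_add_mul (1 + C).toNNReal fun p q => ?_).continuous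
  have h := mcShane_le_add hs p.1 q.1 p.2 q.2
  rw [Real.coe_toNNReal _ (by linarith [hs.1]), Prod.dist_eq]
  have h₁ := le_max_left (dist p.1 q.1) (dist p.2 q.2)
  have h₂ := le_max_right (dist p.1 q.1) (dist p.2 q.2)
  have h₃ := mul_le_mul_of_nonneg_left h₁ hs.1
  linarith

lemma continuous_objective (hs : Stable K a C) :
    Continuous fun p : NC n × Euc n => objective K a C p.1 p.2 := by
  have h₁ : Continuous fun p : NC n × Euc n => ({p.2} : NC n) :=
    NonemptyCompacts.isometry_singleton.continuous.comp continuous_snd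
  have h₂ : Continuous fun p : NC n × Euc n => Metric.diam (p.1 : Set (Euc n)) :=
    continuous_diam.comp continuous_fst
  have h₃ := continuous_mcShane hs
  unfold objective
  exact ((h₁.dist continuous_fst).pow 2).add ((continuous_const.mul h₂).mul h₃)

lemma mcShane_midpoint (hs : Stable K a C) (L : NC n) (x y : Euc n) :
    mcShane K a C L (midpoint ℝ x y) ≤ (mcShane K a C L x + mcShane K a C L y) / 2 := by
  have : Nonempty {A : Euc n → Euc n // IsSimilarity A} := ⟨⟨id, isSimilarity_id⟩⟩
  refine ciSup_le fun T => ?_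
  have h₁ := le_ciSup (bddAbove_mcShane hs L x) T
  have h₂ := le_ciSup (bddAbove_mcShane hs L y) T
  have h₃ := dist_midpoint_midpoint_le x y (T.1 a) (T.1 a)
  rw [midpoint_self] at h₃
  unfold mcShane
  linarith

lemma farDist_midpoint (L : NC n) (x y : Euc n) :
    dist ({midpoint ℝ x y} : NC n) L ^ 2 ≤
      (dist ({x} : NC n) L ^ 2 + dist ({y} : NC n) L ^ 2) / 2 - dist x y ^ 2 / 4 := by
  have key : ∀ z ∈ L, dist (midpoint ℝ x y) z ^ 2 ≤
      (dist ({x} : NC n) L ^ 2 + dist ({y} : NC n) L ^ 2) / 2 - dist x y ^ 2 / 4 := by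
    intro z hz
    have h₁ := pow_le_pow_left₀ dist_nonneg (dist_le_farDist (x := x) hz) 2
    have h₂ := pow_le_pow_left₀ dist_nonneg (dist_le_farDist (x := y) hz) 2
    have e₁ : midpoint ℝ x y - z = (1 / 2 : ℝ) • ((x - z) + (y - z)) := by
      rw [midpoint_eq_smul_add, smul_add, smul_add, smul_sub, smul_sub, invOf_eq_inv]
      module
    have e₂ : x - y = (x - z) - (y - z) := by abel
    have h₃ := parallelogram_law_with_norm ℝ (x - z) (y - z)
    rw [← e₂] at h₃
    rw [dist_eq_norm] at h₁ h₂ ⊢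
    rw [dist_eq_norm, e₁, norm_smul, mul_pow]
    norm_num
    linarith
  obtain ⟨z₀, hz₀⟩ := L.nonempty
  have h := farDist_le (r := √((dist ({x} : NC n) L ^ 2 + dist ({y} : NC n) L ^ 2) / 2
    - dist x y ^ 2 / 4)) (fun z hz => Real.le_sqrt_of_sq_le (key z hz))
  have h' := pow_le_pow_left₀ dist_nonneg h 2
  rwa [Real.sq_sqrt ((sq_nonneg _).trans (key z₀ hz₀))] at h'

lemma objective_midpoint_lt (hs : Stable K a C) (L : NC n) {x y : Euc n} (hxy : x ≠ y) :
    objective K a C L (midpoint ℝ x y) < (objective K a C L x + objective K a C L y) / 2 := by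
  have h₁ := farDist_midpoint L x y
  have h₂ := mul_le_mul_of_nonneg_left (mcShane_midpoint hs L x y)
    (by positivity : 0 ≤ 2 * Metric.diam (L : Set (Euc n)))
  have h₃ : 0 < dist x y ^ 2 := by have := dist_pos.2 hxy; positivity
  unfold objective
  linarith

lemma mcShane_simImage {B : Euc n → Euc n} (hB : IsSimilarity B) {c : ℝ} (hc : 0 < c)
    (hd : ∀ x y, dist (B x) (B y) = c * dist x y) (L : NC n) (x : Euc n) :
    mcShane K a C (simImage hB L) (B x) = c * mcShane K a C L x := by
  unfold mcShane
  rw [Real.mul_iSup_of_nonneg hc.le]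
  symm
  refine Function.Surjective.iSup_congr
    (fun T : {A : Euc n → Euc n // IsSimilarity A} => ⟨B ∘ T.1, hB.comp T.2⟩) ?_ ?_
  · rintro ⟨T, hT⟩
    obtain ⟨B', hB', h, -⟩ := hB.exists_inv
    exact ⟨⟨B' ∘ T, hB'.comp hT⟩, Subtype.ext (funext fun z => h (T z))⟩
  · rintro ⟨T, hT⟩
    simp only [Function.comp_apply]
    rw [simImage_comp hB hT, dist_simImage hB hc hd, hd]
    ring

lemma objective_simImage {B : Euc n → Euc n} (hB : IsSimilarity B) {c : ℝ} (hc : 0 < c)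
    (hd : ∀ x y, dist (B x) (B y) = c * dist x y) (L : NC n) (x : Euc n) :
    objective K a C (simImage hB L) (B x) = c ^ 2 * objective K a C L x := by
  unfold objective
  rw [mcShane_simImage hB hc hd, diam_simImage hB hc hd, ← simImage_singleton hB,
    dist_simImage hB hc hd]
  ring

/-- `x` minimizes the objective over the set `L` itself. -/
def IsBest (K : NC n) (a : Euc n) (C : ℝ) (L : NC n) (x : Euc n) : Prop :=
  x ∈ L ∧ ∀ y ∈ L, objective K a C L x ≤ objective K a C L y

lemma exists_isBest (hs : Stable K a C) (L : NC n) : ∃ x, IsBest K a C L x := by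
  obtain ⟨x, hx, h⟩ := L.isCompact.exists_isMinOn L.nonempty
    (((continuous_objective hs).comp (Continuous.prodMk_right L)).continuousOn)
  exact ⟨x, hx, fun y hy => h hy⟩

lemma IsBest.unique (hs : Stable K a C) {L : NC n} (hL : Convex ℝ (L : Set (Euc n)))
    {x y : Euc n} (hx : IsBest K a C L x) (hy : IsBest K a C L y) : x = y := by
  by_contra hxy
  have h₁ := objective_midpoint_lt hs L hxy
  have h₂ := hx.2 _ (hL.midpoint_mem hx.1 hy.1)
  have h₃ := hy.2 _ (hL.midpoint_mem hx.1 hy.1)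
  linarith

lemma IsBest.simImage {B : Euc n → Euc n} (hB : IsSimilarity B) {L : NC n} {x : Euc n}
    (hx : IsBest K a C L x) : IsBest K a C (simImage hB L) (B x) := by
  obtain ⟨c, hc, hd⟩ := hB.exists_ratio
  refine ⟨⟨x, hx.1, rfl⟩, ?_⟩
  rintro _ ⟨y, hy, rfl⟩
  rw [objective_simImage hB hc hd, objective_simImage hB hc hd]
  have := hx.2 y hy
  gcongr

/-- The term `2 diam(K) E(K, ·)` is an exact penalty: it grows at least like `2 diam(K) |x - a|`,
which outweighs the possible decrease of `D(·, K)²` on `K`. -/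
lemma isBest_self (hs : Stable K a C) (ha : a ∈ K) : IsBest K a C K a := by
  refine ⟨ha, fun x hx => ?_⟩
  have h₁ : mcShane K a C K a ≤ 0 := by
    have : Nonempty {A : Euc n → Euc n // IsSimilarity A} := ⟨⟨id, isSimilarity_id⟩⟩
    exact ciSup_le fun T => sub_nonpos.2 (hs.2 T.1 T.2)
  have h₂ : dist x a ≤ mcShane K a C K x := by
    have := le_ciSup (bddAbove_mcShane hs K x) ⟨id, isSimilarity_id⟩
    simp only [simImage_id, dist_self, mul_zero, sub_zero, id] at this
    exact this
  have h₃ : ∀ z ∈ K, dist ({z} : NC n) K ≤ Metric.diam (K : Set (Euc n)) := fun z hz =>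
    farDist_le fun y hy => Metric.dist_le_diam_of_mem K.isCompact.isBounded hz hy
  have h₄ : dist ({a} : NC n) K ≤ dist x a + dist ({x} : NC n) K := by
    refine farDist_le fun y hy => ?_
    have := dist_triangle_left a y x
    have := dist_le_farDist (x := x) hy
    linarith
  have hR : 0 ≤ Metric.diam (K : Set (Euc n)) := Metric.diam_nonneg
  have h₅ := mul_le_mul_of_nonneg_left h₁ hR
  have h₆ := mul_le_mul_of_nonneg_left h₂ hR
  have h₇ := h₃ a ha
  have h₈ := h₃ x hx
  have h₉ : 0 ≤ dist ({x} : NC n) K := dist_nonneg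
  have h₁₀ : 0 ≤ dist ({a} : NC n) K := dist_nonneg
  have h₁₁ : 0 ≤ dist x a := dist_nonneg
  unfold objective
  nlinarith

/-- Minimizers depend continuously on the set: they stay in a compact region, and a limit of
minimizers is a minimizer for the limit set, hence is the unique one. -/
lemma tendsto_isBest (hs : Stable K a C) {L : NC n} (hL : Convex ℝ (L : Set (Euc n)))
    {x : Euc n} (hx : IsBest K a C L x) {u : ℕ → NC n} {w : ℕ → Euc n}
    (hu : Filter.Tendsto u Filter.atTop (nhds L)) (hw : ∀ k, IsBest K a C (u k) (w k)) :
    Filter.Tendsto w Filter.atTop (nhds x) := by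
  refine Filter.tendsto_of_subseq_tendsto fun ns hns => ?_
  have hd : Filter.Tendsto (fun k => dist (u (ns k)) L) Filter.atTop (nhds 0) :=
    tendsto_iff_dist_tendsto_zero.1 (hu.comp hns)
  choose w' hw' hww' using fun k => exists_near (u (ns k)) L (hw (ns k)).1
  obtain ⟨m, hm, φ, hφ, hlim⟩ := L.isCompact.tendsto_subseq hw'
  refine ⟨φ, ?_⟩
  have hdφ := hd.comp hφ.tendsto_atTop
  have hwlim : Filter.Tendsto (fun k => w (ns (φ k))) Filter.atTop (nhds m) := by
    refine (tendsto_iff_of_dist ?_).2 hlim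
    exact squeeze_zero (fun _ => dist_nonneg) (fun k => hww' (φ k)) hdφ
  have huφ : Filter.Tendsto (fun k => u (ns (φ k))) Filter.atTop (nhds L) :=
    (hu.comp hns).comp hφ.tendsto_atTop
  suffices hbest : IsBest K a C L m by
    rwa [hx.unique hs hL hbest]
  refine ⟨hm, fun y hy => ?_⟩
  choose y' hy' hyy' using fun k => exists_near L (u (ns (φ k))) hy
  have hylim : Filter.Tendsto y' Filter.atTop (nhds y) := by
    rw [tendsto_iff_dist_tendsto_zero]
    refine squeeze_zero (fun _ => dist_nonneg) (fun k => ?_) hdφ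
    rw [dist_comm]
    refine (hyy' k).trans_eq (dist_comm _ _)
  have c₁ := ((continuous_objective hs).tendsto (L, m)).comp (huφ.prodMk_nhds hwlim)
  have c₂ := ((continuous_objective hs).tendsto (L, y)).comp (huφ.prodMk_nhds hylim)
  exact le_of_tendsto_of_tendsto' c₁ c₂ fun k => (hw _).2 _ (hy' k)

lemma exists_invPoint (hs : Stable K a C) (ha : a ∈ K)
    (hK : Convex ℝ (K : Set (Euc n)) ∧ (interior (K : Set (Euc n))).Nonempty) :
    ∃ p : ConvBody n → Euc n, IsSimInvBodyPoint p ∧ p ⟨K, hK⟩ = a := by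
  choose q hq using exists_isBest hs
  refine ⟨fun L => q L.1, ⟨?_, ?_, fun L => (hq L.1).1⟩,
    (hq K).unique hs hK.1 (isBest_self hs ha)⟩
  · refine continuous_iff_seqContinuous.2 fun u L hu => ?_
    exact tendsto_isBest hs L.2.1 (hq L.1) ((continuous_subtype_val.tendsto L).comp hu)
      fun k => hq _
  · intro L M A hA h
    have hM : M.1 = simImage hA L.1 := NonemptyCompacts.ext h
    have h₁ := (hq L.1).simImage hA
    rw [← hM] at h₁
    exact (hq M.1).unique hs M.2.1 h₁
end

/-! ### A ball with two spikes -/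

section
variable {e f : Euc n}

/-- The closed convex hull of the unit ball and the two points `(3/2) e` and `(5/4) f`. -/
def spikeSet (e f : Euc n) : Set (Euc n) :=
  closedConvexHull ℝ (Metric.closedBall 0 1 ∪ {(3 / 2 : ℝ) • e, (5 / 4 : ℝ) • f})

lemma spikeSet_subset {S : Set (Euc n)} (hS : Convex ℝ S) (hc : IsClosed S)
    (hb : ∀ b : Euc n, ‖b‖ ≤ 1 → b ∈ S) (h₀ : (3 / 2 : ℝ) • e ∈ S) (h₁ : (5 / 4 : ℝ) • f ∈ S) :
    spikeSet e f ⊆ S := by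
  refine closedConvexHull_min ?_ hS hc
  rintro x (hx | rfl | rfl)
  · exact hb x (by simpa using hx)
  · exact h₀
  · exact h₁

lemma ball_subset_spikeSet {b : Euc n} (hb : ‖b‖ ≤ 1) : b ∈ spikeSet e f :=
  subset_closedConvexHull (Or.inl (by simpa using hb))

lemma spike_fst_mem : (3 / 2 : ℝ) • e ∈ spikeSet e f :=
  subset_closedConvexHull (Or.inr (Or.inl rfl))

lemma spike_snd_mem : (5 / 4 : ℝ) • f ∈ spikeSet e f :=
  subset_closedConvexHull (Or.inr (Or.inr rfl))

lemma convex_spikeSet : Convex ℝ (spikeSet e f) := convex_closedConvexHull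

lemma interior_spikeSet : (interior (spikeSet e f)).Nonempty := by
  refine ⟨0, interior_mono (s := Metric.ball 0 1) ?_ ?_⟩
  · exact fun b hb => ball_subset_spikeSet (by simpa using (Metric.mem_ball.1 hb).le)
  · rw [Metric.isOpen_ball.interior_eq]
    exact Metric.mem_ball_self one_pos

lemma isCompact_spikeSet : IsCompact (spikeSet e f) := by
  refine Metric.isCompact_of_isClosed_isBounded isClosed_closedConvexHull ?_
  refine (Metric.isBounded_closedBall (x := 0) (r := 1 + ‖(3 / 2 : ℝ) • e‖
    + ‖(5 / 4 : ℝ) • f‖)).subset (spikeSet_subset (convex_closedBall _ _)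
      Metric.isClosed_closedBall (fun b hb => ?_) ?_ ?_)
  all_goals
    rw [mem_closedBall_zero_iff]
    have := norm_nonneg ((3 / 2 : ℝ) • e)
    have := norm_nonneg ((5 / 4 : ℝ) • f)
    linarith

/-- The set `spikeSet e f` as a nonempty compact set. -/
def spikeBody (e f : Euc n) : NC n :=
  ⟨⟨spikeSet e f, isCompact_spikeSet⟩, ⟨_, spike_fst_mem⟩⟩

/-- A continuous convex function is bounded on the body by its values on the ball and at the
spikes. -/
lemma spikeSet_le {g : Euc n → ℝ} (hg : ConvexOn ℝ univ g) (hc : Continuous g) {r : ℝ}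
    (hb : ∀ b : Euc n, ‖b‖ ≤ 1 → g b ≤ r) (h₀ : g ((3 / 2 : ℝ) • e) ≤ r)
    (h₁ : g ((5 / 4 : ℝ) • f) ≤ r) {k : Euc n} (hk : k ∈ spikeSet e f) : g k ≤ r := by
  have h := hg.convex_le r
  simp only [mem_univ, true_and] at h
  exact spikeSet_subset h (isClosed_le hc continuous_const) hb h₀ h₁ hk

lemma convexOn_dist_const (p : Euc n) : ConvexOn ℝ univ fun k : Euc n => ‖k - p‖ := by
  simpa [dist_eq_norm] using convexOn_univ_dist p

/-- A direction `w` pointing sufficiently far away from the spikes: the supporting hyperplane of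
the unit ball with normal `w` also supports the body. -/
lemma inner_le_of_mem {w k : Euc n} (hw : inner ℝ w e ≤ (2 / 3 : ℝ) * ‖w‖)
    (hw' : inner ℝ w f ≤ (4 / 5 : ℝ) * ‖w‖) (hk : k ∈ spikeSet e f) : inner ℝ w k ≤ ‖w‖ := by
  refine spikeSet_le (g := fun k => inner ℝ w k) ((innerₛₗ ℝ w).convexOn convex_univ)
    (by fun_prop) (fun b hb => ?_) ?_ ?_ hk
  · have := real_inner_le_norm w b
    have := mul_le_of_le_one_right (norm_nonneg w) hb
    linarith
  · rw [inner_smul_right]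
    linarith
  · rw [inner_smul_right]
    linarith

/-! ### Rigidity of the spiked ball -/

/-- `(3/2) e` is the farthest point of the body from the origin, and a sharp one: the distance to
it is at most linear in the deficit of the norm. -/
lemma spike_fst_sharp (he : ‖e‖ = 1) (hf : ‖f‖ = 1)
    {k : Euc n} (hk : k ∈ spikeSet e f) :
    ‖k - (3 / 2 : ℝ) • e‖ ≤ 11 * (3 / 2 - ‖k‖) := by
  have hp : ‖(3 / 2 : ℝ) • e‖ = 3 / 2 := by rw [norm_smul, he]; norm_num
  have hq : ‖(5 / 4 : ℝ) • f‖ = 5 / 4 := by rw [norm_smul, hf]; norm_num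
  have key : ‖k - (3 / 2 : ℝ) • e‖ + 11 * ‖k‖ ≤ 33 / 2 := by
    refine spikeSet_le (g := fun k => ‖k - (3 / 2 : ℝ) • e‖ + 11 * ‖k‖)
      ((convexOn_dist_const _).add (convexOn_univ_norm.smul (by norm_num : (0:ℝ) ≤ 11)))
      (by fun_prop) (fun b hb => ?_) ?_ ?_ hk
    · have := norm_sub_le b ((3 / 2 : ℝ) • e)
      linarith
    · simp only [sub_self, norm_zero]
      linarith
    · have := norm_sub_le ((5 / 4 : ℝ) • f) ((3 / 2 : ℝ) • e)
      linarith
  linarith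

/-- `(5/4) f` is the point of the body farthest from the axis `ℝ e`, and a sharp one. -/
lemma spike_snd_sharp (he : ‖e‖ = 1) (hf : ‖f‖ = 1) (hef : inner ℝ e f = 0)
    {k : Euc n} (hk : k ∈ spikeSet e f) :
    ‖k - (5 / 4 : ℝ) • f‖ ≤ 11 * (5 / 4 - ‖k - inner ℝ e k • e‖) := by
  have hp : ‖(3 / 2 : ℝ) • e‖ = 3 / 2 := by rw [norm_smul, he]; norm_num
  have hq : ‖(5 / 4 : ℝ) • f‖ = 5 / 4 := by rw [norm_smul, hf]; norm_num
  let P : Euc n →ₗ[ℝ] Euc n := LinearMap.id - (innerₛₗ ℝ e).smulRight e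
  have hP : ∀ k, P k = k - inner ℝ e k • e := fun k => by simp [P]
  have hPc : Continuous fun k : Euc n => ‖k - inner ℝ e k • e‖ := by fun_prop
  have hconv : ConvexOn ℝ univ fun k : Euc n => ‖k - inner ℝ e k • e‖ := by
    have := (convexOn_univ_norm (E := Euc n)).comp_linearMap P
    simpa [Function.comp_def, hP] using this
  have key : ‖k - (5 / 4 : ℝ) • f‖ + 11 * ‖k - inner ℝ e k • e‖ ≤ 55 / 4 := by
    refine spikeSet_le (g := fun k => ‖k - (5 / 4 : ℝ) • f‖ + 11 * ‖k - inner ℝ e k • e‖)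
      ((convexOn_dist_const _).add (hconv.smul (by norm_num : (0:ℝ) ≤ 11)))
      (by fun_prop) (fun b hb => ?_) ?_ ?_ hk
    · have h₁ := norm_sub_le b ((5 / 4 : ℝ) • f)
      have h₂ : ‖b - inner ℝ e b • e‖ ^ 2 ≤ 1 := by
        rw [norm_sub_sq_real, inner_smul_right, norm_smul, he, real_inner_comm, mul_one,
          Real.norm_eq_abs, sq_abs]
        nlinarith [norm_nonneg b, sq_nonneg (inner ℝ e b : ℝ)]
      have h₃ : ‖b - inner ℝ e b • e‖ ≤ 1 := by
        rwa [sq_le_one_iff₀ (norm_nonneg _)] at h₂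
      linarith
    · have h₁ := norm_sub_le ((3 / 2 : ℝ) • e) ((5 / 4 : ℝ) • f)
      have h₂ : (3 / 2 : ℝ) • e - inner ℝ e ((3 / 2 : ℝ) • e) • e = 0 := by
        rw [inner_smul_right, real_inner_self_eq_norm_sq, he]
        norm_num
      simp only [h₂, norm_zero]
      linarith
    · simp only [sub_self, norm_zero, inner_smul_right, hef, mul_zero, zero_smul, sub_zero]
      linarith
  linarith

/-- The inscribed unit ball determines the centre: a translation in a direction `w` in
which the body reaches no further than the ball is detected by the Hausdorff distance. -/
lemma inner_translation_le {c δ : ℝ} {U : Euc n ≃ₗᵢ[ℝ] Euc n} {v : Euc n} (hc : 1 - δ ≤ c)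
    (hδ : ∀ x ∈ spikeSet e f, ∃ k ∈ spikeSet e f, ‖c • U x + v - k‖ ≤ δ) {w : Euc n}
    (hw : inner ℝ w e ≤ (2 / 3 : ℝ) * ‖w‖) (hw' : inner ℝ w f ≤ (4 / 5 : ℝ) * ‖w‖) :
    inner ℝ w v ≤ 2 * δ * ‖w‖ := by
  rcases eq_or_ne w 0 with rfl | hw0
  · simp
  have hpos : 0 < ‖w‖ := norm_pos_iff.2 hw0
  obtain ⟨k, hk, hkδ⟩ := hδ (U.symm (‖w‖⁻¹ • w)) (ball_subset_spikeSet (by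
    rw [LinearIsometryEquiv.norm_map, norm_smul, norm_inv, norm_norm, inv_mul_cancel₀ hpos.ne']))
  have h₁ := inner_le_of_mem hw hw' hk
  have h₂ := real_inner_le_norm w (c • U (U.symm (‖w‖⁻¹ • w)) + v - k)
  rw [LinearIsometryEquiv.apply_symm_apply] at h₂ hkδ
  rw [inner_sub_right, inner_add_right, inner_smul_right, inner_smul_right,
    real_inner_self_eq_norm_sq] at h₂
  have h₃ : ‖w‖⁻¹ * ‖w‖ ^ 2 = ‖w‖ := by field_simp
  rw [h₃] at h₂
  have h₄ := mul_le_mul_of_nonneg_left hkδ hpos.le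
  have h₅ := mul_le_mul_of_nonneg_right hc hpos.le
  linarith

lemma norm_translation_le (he : ‖e‖ = 1) (hf : ‖f‖ = 1) (hef : inner ℝ e f = 0)
    {c δ : ℝ} {U : Euc n ≃ₗᵢ[ℝ] Euc n} {v : Euc n} (hc : 1 - δ ≤ c)
    (hδ : ∀ x ∈ spikeSet e f, ∃ k ∈ spikeSet e f, ‖c • U x + v - k‖ ≤ δ) :
    ‖v‖ ≤ 12 * δ := by
  have hee : inner ℝ e e = (1 : ℝ) := by rw [real_inner_self_eq_norm_sq, he]; norm_num
  have hff : inner ℝ f f = (1 : ℝ) := by rw [real_inner_self_eq_norm_sq, hf]; norm_num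
  have hfe : inner ℝ f e = (0 : ℝ) := by rw [real_inner_comm, hef]
  have h₁ := inner_translation_le hc hδ (w := -e)
    (by rw [inner_neg_left, hee, norm_neg, he]; norm_num)
    (by rw [inner_neg_left, hef, norm_neg, he]; norm_num)
  have h₂ := inner_translation_le hc hδ (w := -f)
    (by rw [inner_neg_left, hfe, norm_neg, hf]; norm_num)
    (by rw [inner_neg_left, hff, norm_neg, hf]; norm_num)
  -- The 3-4-5 triangle gives a unit vector in the quadrant of the spikes that still satisfies
  -- both constraints.
  have hn : ‖(3 : ℝ) • e + (4 : ℝ) • f‖ = 5 := by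
    have : ‖(3 : ℝ) • e + (4 : ℝ) • f‖ ^ 2 = 5 ^ 2 := by
      rw [norm_add_sq_real, norm_smul, norm_smul, inner_smul_left, inner_smul_right, hef, he, hf]
      norm_num
    exact (pow_left_inj₀ (norm_nonneg _) (by norm_num) two_ne_zero).1 this
  have h₃ := inner_translation_le hc hδ (w := (3 : ℝ) • e + (4 : ℝ) • f)
    (by rw [inner_add_left, real_inner_smul_left, real_inner_smul_left, hee, hfe, hn]; norm_num)
    (by rw [inner_add_left, real_inner_smul_left, real_inner_smul_left, hef, hff, hn]; norm_num)
  rw [inner_neg_left, norm_neg, he] at h₁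
  rw [inner_neg_left, norm_neg, hf] at h₂
  rw [inner_add_left, real_inner_smul_left, real_inner_smul_left, hn] at h₃
  set v₀ : ℝ := inner ℝ e v with hv₀
  set v₁ : ℝ := inner ℝ f v with hv₁
  set z : Euc n := v - v₀ • e - v₁ • f with hz
  have hze : inner ℝ z e = (0 : ℝ) := by
    rw [hz, inner_sub_left, inner_sub_left, real_inner_smul_left, real_inner_smul_left, hee, hfe,
      real_inner_comm]
    simp [hv₀]
  have hzf : inner ℝ z f = (0 : ℝ) := by
    rw [hz, inner_sub_left, inner_sub_left, real_inner_smul_left, real_inner_smul_left, hff, hef,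
      real_inner_comm]
    simp [hv₁]
  have h₄ := inner_translation_le hc hδ (w := z) (by rw [hze]; positivity)
    (by rw [hzf]; positivity)
  have hv : v = z + v₀ • e + v₁ • f := by rw [hz]; abel
  have h₅ : inner ℝ z v = ‖z‖ ^ 2 := by
    rw [hv, inner_add_right, inner_add_right, inner_smul_right, inner_smul_right, hze, hzf,
      real_inner_self_eq_norm_sq]
    ring
  rw [h₅] at h₄
  have hδ0 : 0 ≤ δ := by
    obtain ⟨k, -, h⟩ := hδ _ spike_fst_mem
    exact (norm_nonneg _).trans h
  have h₆ : ‖z‖ ≤ 2 * δ := by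
    by_contra hlt
    push Not at hlt
    nlinarith
  have h₇ : ‖v‖ ≤ ‖z‖ + |v₀| + |v₁| := by
    conv_lhs => rw [hv]
    refine (norm_add_le _ _).trans ?_
    refine add_le_add ((norm_add_le _ _).trans ?_) ?_
    · rw [norm_smul, he, mul_one, Real.norm_eq_abs]
    · rw [norm_smul, hf, mul_one, Real.norm_eq_abs]
  have h₈ : |v₀| ≤ 6 * δ := abs_le.2 ⟨by linarith, by linarith⟩
  have h₉ : |v₁| ≤ 4 * δ := abs_le.2 ⟨by linarith, by linarith⟩
  linarith

/-- A similarity that moves the body by at most `δ` moves the centre and both spikes by `O(δ)`. -/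
lemma spike_rigid (he : ‖e‖ = 1) (hf : ‖f‖ = 1) (hef : inner ℝ e f = 0)
    {c δ : ℝ} {U : Euc n ≃ₗᵢ[ℝ] Euc n} {v : Euc n}
    (hc : |c - 1| ≤ δ)
    (hδ : ∀ x ∈ spikeSet e f, ∃ k ∈ spikeSet e f, ‖c • U x + v - k‖ ≤ δ) :
    ‖v‖ ≤ 12 * δ ∧ ‖U e - e‖ ≤ 120 * δ ∧ ‖U f - f‖ ≤ 1700 * δ := by
  obtain ⟨hc₁, hc₂⟩ := abs_le.1 hc
  have hv := norm_translation_le he hf hef (by linarith) hδ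
  have hδ0 : 0 ≤ δ := (abs_nonneg _).trans hc
  -- Points of the body near the image of `r • x` are near `r • U x`.
  have near : ∀ (r : ℝ) (x k : Euc n), 0 ≤ r → ‖x‖ = 1 → ‖c • U (r • x) + v - k‖ ≤ δ →
      ‖k - r • U x‖ ≤ (13 + r) * δ := by
    intro r x k hr hx hk
    have e₁ : k - r • U x = (c - 1) • (r • U x) + v - (c • U (r • x) + v - k) := by
      rw [map_smul]
      module
    have e₂ : ‖(c - 1) • (r • U x)‖ ≤ r * δ := by
      rw [norm_smul, norm_smul, U.norm_map, hx, mul_one, Real.norm_eq_abs, Real.norm_of_nonneg hr,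
        mul_comm]
      gcongr
    rw [e₁]
    have := norm_sub_le ((c - 1) • (r • U x) + v) (c • U (r • x) + v - k)
    have := norm_add_le ((c - 1) • (r • U x)) v
    linarith
  have sm : ∀ (r : ℝ) (x y : Euc n), 0 ≤ r → ‖r • U x - r • y‖ = r * ‖U x - y‖ := by
    intro r x y hr
    rw [← smul_sub, norm_smul, Real.norm_of_nonneg hr]
  obtain ⟨k, hk, hkδ⟩ := hδ _ spike_fst_mem
  have n₁ := near (3 / 2) e k (by norm_num) he hkδ
  have s₁ := spike_fst_sharp he hf hk
  have t₁ := norm_sub_norm_le ((3 / 2 : ℝ) • U e) k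
  rw [norm_sub_rev, norm_smul, U.norm_map, he] at t₁
  norm_num at t₁
  have t₂ := norm_sub_le_norm_sub_add_norm_sub ((3 / 2 : ℝ) • U e) k ((3 / 2 : ℝ) • e)
  rw [sm _ _ _ (by norm_num), norm_sub_rev _ k] at t₂
  have hUe : ‖U e - e‖ ≤ 120 * δ := by linarith
  refine ⟨hv, hUe, ?_⟩
  obtain ⟨l, hl, hlδ⟩ := hδ _ spike_snd_mem
  have n₂ := near (5 / 4) f l (by norm_num) hf hlδ
  have s₂ := spike_snd_sharp he hf hef hl
  -- `U f` is orthogonal to `U e`, hence almost orthogonal to `e`.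
  have o₁ : |(inner ℝ e (U f) : ℝ)| ≤ 120 * δ := by
    have : (inner ℝ e (U f) : ℝ) = -inner ℝ (U e - e) (U f) := by
      rw [inner_sub_left, U.inner_map_map, hef]
      ring
    rw [this, abs_neg]
    refine (abs_real_inner_le_norm _ _).trans ?_
    rwa [U.norm_map, hf, mul_one]
  have o₂ : |(inner ℝ e l : ℝ)| ≤ 170 * δ := by
    have e₁ : (inner ℝ e l : ℝ) =
        inner ℝ e (l - (5 / 4 : ℝ) • U f) + 5 / 4 * inner ℝ e (U f) := by
      rw [inner_sub_right, inner_smul_right]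
      ring
    have e₂ := abs_real_inner_le_norm e (l - (5 / 4 : ℝ) • U f)
    have e₃ := abs_add_le (inner ℝ e (l - (5 / 4 : ℝ) • U f) : ℝ) (5 / 4 * inner ℝ e (U f))
    rw [abs_mul, ← e₁] at e₃
    rw [he, one_mul] at e₂
    norm_num at e₃
    linarith
  have t₃ := norm_sub_norm_le ((5 / 4 : ℝ) • U f) l
  rw [norm_sub_rev, norm_smul, U.norm_map, hf] at t₃
  norm_num at t₃
  have t₄ := norm_sub_norm_le l (inner ℝ e l • e)
  rw [norm_smul, he, mul_one, Real.norm_eq_abs] at t₄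
  have t₅ := norm_sub_le_norm_sub_add_norm_sub ((5 / 4 : ℝ) • U f) l ((5 / 4 : ℝ) • f)
  rw [sm _ _ _ (by norm_num), norm_sub_rev _ l] at t₅
  linarith

/-- Every point of the plane of the spikes is a stable point of the body. -/
lemma spike_stable (he : ‖e‖ = 1) (hf : ‖f‖ = 1) (hef : inner ℝ e f = 0)
    (α β : ℝ) : ∃ C, Stable (spikeBody e f) (α • e + β • f) C := by
  refine ⟨‖α • e + β • f‖ + 12 + |α| * 120 + |β| * 1700, by positivity, ?_⟩
  intro T hT
  obtain ⟨c, U, v, hcpos, hTU⟩ := id hT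
  have hd : ∀ x y, dist (T x) (T y) = c * dist x y := fun x y => by
    rw [hTU, hTU, dist_add_right, dist_smul₀, Real.norm_of_nonneg hcpos.le, U.dist_map]
  set δ := dist (spikeBody e f) (simImage hT (spikeBody e f)) with hδdef
  have hδ : ∀ x ∈ spikeSet e f, ∃ k ∈ spikeSet e f, ‖c • U x + v - k‖ ≤ δ := by
    intro x hx
    obtain ⟨k, hk, h⟩ := exists_near (simImage hT (spikeBody e f)) (spikeBody e f)
      (mem_simImage.2 ⟨x, hx, rfl⟩)
    refine ⟨k, hk, ?_⟩
    rwa [dist_eq_norm, hTU, dist_comm (simImage _ _)] at h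
  have hdiam : (2 : ℝ) ≤ Metric.diam (spikeBody e f : Set (Euc n)) := by
    have := Metric.dist_le_diam_of_mem (spikeBody e f).isCompact.isBounded
      (ball_subset_spikeSet he.le : e ∈ spikeSet e f)
      (ball_subset_spikeSet (by rw [norm_neg, he]) : -e ∈ spikeSet e f)
    refine le_trans (le_of_eq ?_) this
    rw [dist_eq_norm, sub_neg_eq_add, ← two_smul ℝ, norm_smul, he]
    norm_num
  have hc : |c - 1| ≤ δ := by
    have h₁ := diam_le_add (spikeBody e f) (simImage hT (spikeBody e f))
    have h₂ := diam_le_add (simImage hT (spikeBody e f)) (spikeBody e f)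
    rw [dist_comm] at h₂
    rw [diam_simImage hT hcpos hd, ← hδdef] at h₁ h₂
    have h₀ : (0 : ℝ) ≤ δ := dist_nonneg
    rw [abs_le]
    constructor
    · by_contra! h
      nlinarith
    · by_contra! h
      nlinarith
  obtain ⟨b₁, b₂, b₃⟩ := spike_rigid he hf hef hc hδ
  have e₁ : T (α • e + β • f) - (α • e + β • f) =
      (c - 1) • U (α • e + β • f) + v + α • (U e - e) + β • (U f - f) := by
    rw [hTU, map_add, map_smul, map_smul]
    module
  rw [dist_comm, dist_eq_norm, e₁]
  have f₁ : ‖(c - 1) • U (α • e + β • f)‖ ≤ ‖α • e + β • f‖ * δ := by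
    rw [norm_smul, U.norm_map, Real.norm_eq_abs, mul_comm]
    gcongr
  have f₂ : ‖α • (U e - e)‖ ≤ |α| * (120 * δ) := by
    rw [norm_smul, Real.norm_eq_abs]
    gcongr
  have f₃ : ‖β • (U f - f)‖ ≤ |β| * (1700 * δ) := by
    rw [norm_smul, Real.norm_eq_abs]
    gcongr
  have := norm_add_le ((c - 1) • U (α • e + β • f) + v + α • (U e - e)) (β • (U f - f))
  have := norm_add_le ((c - 1) • U (α • e + β • f) + v) (α • (U e - e))
  have := norm_add_le ((c - 1) • U (α • e + β • f)) v
  linarith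

/-- On the arc of the unit circle opposite to the spikes, the point `a` is extreme: the body lies
in the ball with centre `-(5/2) a` and radius `7/2`, whose boundary sphere passes through `a`. -/
lemma spike_extreme (he : ‖e‖ = 1) (hf : ‖f‖ = 1) (hef : inner ℝ e f = 0)
    {α β : ℝ} (hα : 0 ≤ α) (hβ : 0 ≤ β) (hαβ : α ^ 2 + β ^ 2 = 1) :
    (-α) • e + (-β) • f ∈ (spikeSet e f).extremePoints ℝ := by
  set a : Euc n := (-α) • e + (-β) • f with ha
  have hae : inner ℝ a e = -α := by
    rw [ha, inner_add_left, real_inner_smul_left, real_inner_smul_left, real_inner_comm e f, hef,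
      real_inner_self_eq_norm_sq, he]
    ring
  have haf : inner ℝ a f = -β := by
    rw [ha, inner_add_left, real_inner_smul_left, real_inner_smul_left, hef,
      real_inner_self_eq_norm_sq, hf]
    ring
  have hna : ‖a‖ = 1 := by
    have h : ‖a‖ ^ 2 = 1 ^ 2 := by
      rw [← real_inner_self_eq_norm_sq]
      nth_rw 2 [ha]
      rw [inner_add_right, inner_smul_right, inner_smul_right, hae, haf]
      linarith
    exact (pow_left_inj₀ (norm_nonneg _) (by norm_num) two_ne_zero).1 h
  have sq : ∀ k : Euc n, ‖k‖ ^ 2 + 5 * inner ℝ a k ≤ 6 →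
      k ∈ Metric.closedBall (-((5 / 2 : ℝ) • a)) (7 / 2) := by
    intro k hk
    rw [mem_closedBall_iff_norm, sub_neg_eq_add]
    refine le_of_sq_le_sq ?_ (by norm_num)
    rw [norm_add_sq_real, inner_smul_right, norm_smul, hna, real_inner_comm]
    norm_num
    linarith
  have hsub : spikeSet e f ⊆ Metric.closedBall (-((5 / 2 : ℝ) • a)) (7 / 2) := by
    refine spikeSet_subset (convex_closedBall _ _) Metric.isClosed_closedBall
      (fun b hb => sq _ ?_) (sq _ ?_) (sq _ ?_)
    · have := real_inner_le_norm a b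
      rw [hna, one_mul] at this
      nlinarith [norm_nonneg b]
    · rw [norm_smul, he, inner_smul_right, hae]
      norm_num
      linarith
    · rw [norm_smul, hf, inner_smul_right, haf]
      norm_num
      linarith
  refine inter_extremePoints_subset_extremePoints_of_subset hsub
    ⟨ball_subset_spikeSet hna.le, ?_⟩
  apply StrictConvexSpace.sphere_subset_extremePoints_closedBall
  · norm_num
  rw [mem_sphere_iff_norm, sub_neg_eq_add]
  have : a + (5 / 2 : ℝ) • a = (7 / 2 : ℝ) • a := by module
  rw [this, norm_smul, hna]
  norm_num
end

end

/-! ### Infinitely many extreme values -/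

theorem stmt7 (n : ℕ) (hn : 3 ≤ n) :
    ∃ K : ConvBody n,
      ∀ F : Set (Euc n), F.Finite →
        {x : Euc n | ∃ p : ConvBody n → Euc n, IsSimInvBodyPoint p ∧ p K = x} ≠
          convexHull ℝ F := by
  obtain ⟨e, f, he, hf, hef⟩ : ∃ e f : Euc n, ‖e‖ = 1 ∧ ‖f‖ = 1 ∧ inner ℝ e f = (0 : ℝ) := by
    refine ⟨EuclideanSpace.single ⟨0, by omega⟩ 1, EuclideanSpace.single ⟨1, by omega⟩ 1, ?_, ?_, ?_⟩
    · simp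
    · simp
    · simp [EuclideanSpace.inner_single_left]
  have hK : Convex ℝ (spikeBody e f : Set (Euc n)) ∧
      (interior (spikeBody e f : Set (Euc n))).Nonempty := ⟨convex_spikeSet, interior_spikeSet⟩
  refine ⟨⟨spikeBody e f, hK⟩, fun F hF hS => ?_⟩
  let γ : ℝ → Euc n := fun t => (-t) • e + (-√(1 - t ^ 2)) • f
  have hγ : ∀ t ∈ Icc (0 : ℝ) 1, γ t ∈ F := by
    intro t ht
    have hext : γ t ∈ (spikeSet e f).extremePoints ℝ := by
      refine spike_extreme he hf hef ht.1 (Real.sqrt_nonneg _) ?_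
      rw [Real.sq_sqrt (by nlinarith [ht.1, ht.2])]
      ring
    obtain ⟨C, hC⟩ := spike_stable he hf hef (-t) (-√(1 - t ^ 2))
    have hmem : γ t ∈ convexHull ℝ F := by
      rw [← hS]
      exact exists_invPoint hC hext.1 hK
    have hsub : convexHull ℝ F ⊆ spikeSet e f := by
      rw [← hS]
      rintro x ⟨p, hp, rfl⟩
      exact hp.2.2 ⟨spikeBody e f, hK⟩
    exact extremePoints_convexHull_subset
      (inter_extremePoints_subset_extremePoints_of_subset hsub ⟨hmem, hext⟩)
  have hinj : Function.Injective γ := by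
    intro s t hst
    have h := congrArg (fun x => (inner ℝ e x : ℝ)) hst
    simpa [γ, inner_add_right, inner_smul_right, hef, he] using h
  exact (Icc_infinite (zero_lt_one' ℝ)).image hinj.injOn
    (hF.subset (image_subset_iff.2 hγ))
end
end
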